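/- Assume (A1'), (A2) and (A3). Let λ₀ ∈ D be a point at which Λ is differentiable and set x₀ = ∇Λ(λ₀). If liminf_{n→∞} (log k(n))/n > Λ*(x₀), then there exists r > 0 such that the closed ball B(λ₀,r) is contained in D and, with probability 1, Λ_n^ω converges uniformly to Λ on B(λ₀,r). (Theorem 5(1).) -/

import Mathlib

open MeasureTheory ProbabilityTheory Filter Set Real
open scoped ENNReal NNReal Classical Topology RealInnerProductSpace

/-!
Put `V = ⟨λ, S_nΦ⟩`. Then `exp (n Λ_n^ω(λ))` is the average of `exp V` over `k(n)` successive blocks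
of length `n`, and its mean is `exp (n Λ_n(λ)) = exp (n Λ(λ) + o(n))`. Markov's inequality and the
Borel–Cantelli lemma give the upper bound for `Λ_n^ω(λ)`.

For the lower bound, `exp V` is truncated at `exp (n b)` with `b` slightly above `⟨λ, x₀⟩`. Since
`x₀` is the gradient of `Λ` at `λ₀`, comparison with the parameter `(1 + t) λ` for a small `t > 0`
shows that for `λ` near `λ₀` the truncation does not change the exponential rate of the mean. The
variance of the block average of the truncated variables is controlled by covariance inequalities,
because by (A2) the mixing coefficients decay faster than any power: it is negligible against the
square of the mean as soon as there are `exp (n κ)` blocks with `κ > ⟨λ₀, x₀⟩ - Λ(λ₀) = Λ*(x₀)`.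
Hence, almost surely, `Λ_n^ω → Λ` on a countable dense subset of a neighbourhood of `λ₀`, and
convexity of `Λ_n^ω` turns this into uniform convergence on a ball.
-/

section ConvexConvergence

lemma tendstoUniformlyOn_of_eventually_lipschitzOnWith {ι X Y : Type*} [PseudoMetricSpace X]
    [PseudoMetricSpace Y] {l : Filter ι} {f : ι → X → Y} {g : X → Y} {K : ℝ≥0} {s A : Set X}
    (hs : IsCompact s) (hAs : A ⊆ s) (hA : s ⊆ closure A)
    (hf : ∀ᶠ n in l, LipschitzOnWith K (f n) s) (hg : LipschitzOnWith K g s)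
    (hlim : ∀ a ∈ A, Tendsto (fun n => f n a) l (𝓝 (g a))) : TendstoUniformlyOn f g l s := by
  rw [Metric.tendstoUniformlyOn_iff]
  intro ε hε
  set η : ℝ := ε / (3 * (K + 1)) with hη_def
  have hη : 0 < η := by positivity
  have hKη : K * η ≤ ε / 3 := by
    calc (K : ℝ) * η ≤ (K + 1) * η := by gcongr; linarith
      _ = ε / 3 := by rw [hη_def]; field_simp
  obtain ⟨T, hTA, hTfin, hsT⟩ := hs.elim_finite_subcover_image (b := A)
    (c := fun a => Metric.ball a η) (fun _ _ => Metric.isOpen_ball) fun y hy => by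
      obtain ⟨a, ha, hya⟩ := Metric.mem_closure_iff.1 (hA hy) η hη
      exact mem_biUnion ha hya
  have hT : ∀ᶠ n in l, ∀ a ∈ T, dist (f n a) (g a) < ε / 3 :=
    (eventually_all_finite hTfin).2 fun a ha =>
      Metric.tendsto_nhds.1 (hlim a (hTA ha)) _ (by positivity)
  filter_upwards [hf, hT] with n hn hnT y hy
  obtain ⟨a, ha, hya⟩ := mem_iUnion₂.1 (hsT hy)
  have has : a ∈ s := hAs (hTA ha)
  have hKya : K * dist y a ≤ ε / 3 := (by gcongr; exact hya.le : _ ≤ K * η).trans hKη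
  calc dist (g y) (f n y)
      ≤ dist (g y) (g a) + dist (g a) (f n a) + dist (f n a) (f n y) := dist_triangle4 _ _ _ _
    _ < ε / 3 + ε / 3 + ε / 3 := by
      have hfn := hn.dist_le_mul y hy a has
      have hgn := hg.dist_le_mul y hy a has
      rw [dist_comm (g a) (f n a), dist_comm (f n a) (f n y)]
      linarith [hnT a ha]
    _ = ε := by ring

variable {V : Type*} [NormedAddCommGroup V] [NormedSpace ℝ V]

lemma abs_le_three_mul_of_convexOn_ball {x₀ : V} {R M : ℝ} {f : V → ℝ}
    (hf : ConvexOn ℝ (Metric.ball x₀ R) f) (hup : ∀ a ∈ Metric.ball x₀ R, f a ≤ M)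
    (hlow : -M ≤ f x₀) {a : V} (ha : a ∈ Metric.ball x₀ R) : |f a| ≤ 3 * M := by
  set b : V := (2 : ℝ) • x₀ - a with hb_def
  have hb : b ∈ Metric.ball x₀ R := by
    rw [mem_ball_iff_norm] at ha ⊢
    rwa [show b - x₀ = -(a - x₀) by rw [hb_def]; module, norm_neg]
  have hmid : f x₀ ≤ (1 / 2) * f a + (1 / 2) * f b := by
    have h := hf.2 ha hb (by norm_num : (0 : ℝ) ≤ 1 / 2) (by norm_num : (0 : ℝ) ≤ 1 / 2)
      (by norm_num)
    rwa [show (1 / 2 : ℝ) • a + (1 / 2 : ℝ) • b = x₀ by rw [hb_def]; module] at h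
  have hfa := hup a ha
  have hfb := hup b hb
  rw [abs_le]
  constructor <;> linarith

lemma lipschitzOnWith_of_ball_subset_convexHull {x₀ : V} {ρ M : ℝ} (hρ : 0 < ρ) {F U : Set V}
    (hFU : convexHull ℝ F ⊆ U) (hball : Metric.ball x₀ ρ ⊆ convexHull ℝ F) {f : V → ℝ}
    (hf : ConvexOn ℝ U f) (hM : ∀ q ∈ F, f q ≤ M) (hM₀ : -M ≤ f x₀) :
    LipschitzOnWith (2 * (3 * M) / (ρ / 2)).toNNReal f (Metric.ball x₀ (ρ - ρ / 2)) := by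
  have hf' := hf.subset (hball.trans hFU) (convex_ball _ _)
  have hup : ∀ a ∈ Metric.ball x₀ ρ, f a ≤ M := fun a ha => by
    obtain ⟨y, hy, hay⟩ := hf.exists_ge_of_mem_convexHull ((subset_convexHull ℝ F).trans hFU)
      (hball ha)
    exact hay.trans (hM y hy)
  exact hf'.lipschitzOnWith_of_abs_le (by positivity) fun a ha =>
    abs_le_three_mul_of_convexOn_ball hf' hup hM₀ ha

lemma exists_eventually_lipschitzOnWith_of_tendsto {ι : Type*} {l : Filter ι} {x₀ : V} {ρ : ℝ}
    (hρ : 0 < ρ) {F U : Set V} (hF : F.Finite) (hFU : convexHull ℝ F ⊆ U)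
    (hball : Metric.ball x₀ ρ ⊆ convexHull ℝ F) {f : ι → V → ℝ} {g : V → ℝ}
    (hf : ∀ n, ConvexOn ℝ U (f n)) (hg : ConvexOn ℝ U g)
    (hlim : ∀ q ∈ F ∪ {x₀}, Tendsto (fun n => f n q) l (𝓝 (g q))) :
    ∃ K : ℝ≥0, (∀ᶠ n in l, LipschitzOnWith K (f n) (Metric.ball x₀ (ρ - ρ / 2))) ∧
      LipschitzOnWith K g (Metric.ball x₀ (ρ - ρ / 2)) := by
  obtain ⟨C, hC⟩ := (hF.image g).bddAbove
  set M : ℝ := max (C + 1) (-g x₀ + 1)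
  have hgM : ∀ q ∈ F, g q < M := fun q hq => by
    linarith [hC (mem_image_of_mem g hq), le_max_left (C + 1) (-g x₀ + 1)]
  have hgM₀ : -M < g x₀ := by linarith [le_max_right (C + 1) (-g x₀ + 1)]
  have hfM : ∀ᶠ n in l, ∀ q ∈ F, f n q < M :=
    (eventually_all_finite hF).2 fun q hq => (hlim q (.inl hq)).eventually_lt_const (hgM q hq)
  have hfM₀ : ∀ᶠ n in l, -M < f n x₀ := (hlim x₀ (.inr rfl)).eventually_const_lt hgM₀
  refine ⟨(2 * (3 * M) / (ρ / 2)).toNNReal, ?_,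
    lipschitzOnWith_of_ball_subset_convexHull hρ hFU hball hg (fun q hq => (hgM q hq).le) hgM₀.le⟩
  filter_upwards [hfM, hfM₀] with n hn hn₀
  exact lipschitzOnWith_of_ball_subset_convexHull hρ hFU hball (hf n)
    (fun q hq => (hn q hq).le) hn₀.le

lemma exists_countable_tendstoUniformlyOn_of_convexOn [FiniteDimensional ℝ V] {x₀ : V}
    {U : Set V} (hU : U ∈ 𝓝 x₀) :
    ∃ Q ⊆ U, Q.Countable ∧ ∃ r > 0, Metric.closedBall x₀ r ⊆ U ∧
      ∀ (f : ℕ → V → ℝ) (g : V → ℝ), (∀ n, ConvexOn ℝ U (f n)) → ConvexOn ℝ U g →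
        (∀ q ∈ Q, Tendsto (fun n => f n q) atTop (𝓝 (g q))) →
        TendstoUniformlyOn f g atTop (Metric.closedBall x₀ r) := by
  obtain ⟨b, hx₀b, hbU⟩ := exists_mem_interior_convexHull_affineBasis hU
  obtain ⟨ρ, hρ, hball⟩ := Metric.mem_nhds_iff.1 (mem_interior_iff_mem_nhds.1 hx₀b)
  have : ProperSpace V := FiniteDimensional.proper_real V
  have hcpt : IsCompact (Metric.closedBall x₀ (ρ / 3)) := isCompact_closedBall _ _
  obtain ⟨A, hAr, hAc, hAd⟩ := hcpt.isSeparable.exists_countable_dense_subset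
  have hr : Metric.closedBall x₀ (ρ / 3) ⊆ Metric.ball x₀ (ρ - ρ / 2) :=
    Metric.closedBall_subset_ball (by linarith)
  have hrU : Metric.closedBall x₀ (ρ / 3) ⊆ U :=
    (hr.trans (Metric.ball_subset_ball (by linarith))).trans (hball.trans hbU)
  refine ⟨range b ∪ {x₀} ∪ A,
    union_subset (union_subset ((subset_convexHull ℝ _).trans hbU)
      (singleton_subset_iff.2 (mem_of_mem_nhds hU))) (hAr.trans hrU),
    ((finite_range b).countable.union (countable_singleton _)).union hAc,
    ρ / 3, by positivity, hrU, fun f g hf hg hlim => ?_⟩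
  obtain ⟨K, hfK, hgK⟩ := exists_eventually_lipschitzOnWith_of_tendsto hρ (finite_range b) hbU
    hball hf hg fun q hq => hlim q (.inl hq)
  exact tendstoUniformlyOn_of_eventually_lipschitzOnWith hcpt hAr hAd
    (hfK.mono fun n hn => hn.mono hr) (hgK.mono hr) fun a ha => hlim a (.inr ha)

end ConvexConvergence

section ExponentialRate

/-- `I n = exp (n L + o(n))`: the sequence `I` has exponential rate `L`. The limit is taken in
`EReal`, so that `I n` may vanish or be infinite for finitely many `n`. -/
def HasExpRate (I : ℕ → ℝ≥0∞) (L : ℝ) : Prop :=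
  Tendsto (fun n : ℕ => ((n : ℝ)⁻¹ : EReal) * ENNReal.log (I n)) atTop (𝓝 (L : EReal))

lemma ereal_le_inv_mul_log_iff {n : ℕ} (hn : 0 < n) {c : ℝ} {J : ℝ≥0∞} :
    (c : EReal) ≤ ((n : ℝ)⁻¹ : EReal) * ENNReal.log J ↔ ENNReal.ofReal (rexp (n * c)) ≤ J := by
  have hn' : (0 : ℝ) < n := by exact_mod_cast hn
  rw [← ENNReal.log_le_log_iff, ENNReal.log_ofReal_of_pos (exp_pos _), Real.log_exp,
    ← EReal.coe_inv, mul_comm, EReal.coe_inv, ← div_eq_mul_inv,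
    EReal.le_div_iff_mul_le (by exact_mod_cast hn') (EReal.coe_ne_top _), mul_comm (n : ℝ),
    EReal.coe_mul]

lemma ereal_inv_mul_log_le_iff {n : ℕ} (hn : 0 < n) {c : ℝ} {J : ℝ≥0∞} :
    ((n : ℝ)⁻¹ : EReal) * ENNReal.log J ≤ (c : EReal) ↔ J ≤ ENNReal.ofReal (rexp (n * c)) := by
  have hn' : (0 : ℝ) < n := by exact_mod_cast hn
  rw [← ENNReal.log_le_log_iff, ENNReal.log_ofReal_of_pos (exp_pos _), Real.log_exp,
    mul_comm, ← div_eq_mul_inv,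
    EReal.div_le_iff_le_mul (by exact_mod_cast hn') (EReal.coe_ne_top _),
    EReal.coe_mul]

lemma hasExpRate_iff {I : ℕ → ℝ≥0∞} {L : ℝ} :
    HasExpRate I L ↔ ∀ ε > 0, ∀ᶠ n : ℕ in atTop, ENNReal.ofReal (rexp (n * (L - ε))) ≤ I n ∧
      I n ≤ ENNReal.ofReal (rexp (n * (L + ε))) := by
  constructor
  · intro h ε hε
    filter_upwards [h.eventually_const_le (EReal.coe_lt_coe_iff.2 (sub_lt_self L hε)),
      h.eventually_le_const (EReal.coe_lt_coe_iff.2 (lt_add_of_pos_right L hε)),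
      eventually_gt_atTop 0] with n hlow hup hn
    exact ⟨(ereal_le_inv_mul_log_iff hn).1 hlow, (ereal_inv_mul_log_le_iff hn).1 hup⟩
  · intro h
    refine tendsto_order.2 ⟨fun a ha => ?_, fun a ha => ?_⟩
    · obtain ⟨c, hac, hcL⟩ := EReal.lt_iff_exists_real_btwn.1 ha
      filter_upwards [h (L - c) (sub_pos.2 (EReal.coe_lt_coe_iff.1 hcL)),
        eventually_gt_atTop 0] with n hn hn0
      rw [sub_sub_cancel] at hn
      exact hac.trans_le ((ereal_le_inv_mul_log_iff hn0).2 hn.1)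
    · obtain ⟨c, hLc, hca⟩ := EReal.lt_iff_exists_real_btwn.1 ha
      filter_upwards [h (c - L) (sub_pos.2 (EReal.coe_lt_coe_iff.1 hLc)),
        eventually_gt_atTop 0] with n hn hn0
      rw [add_sub_cancel] at hn
      exact ((ereal_inv_mul_log_le_iff hn0).2 hn.2).trans_lt hca

lemma ae_hasExpRate {Ω : Type*} [MeasurableSpace Ω] {P : Measure Ω} {I : ℕ → Ω → ℝ≥0∞} {L : ℝ}
    (hlow : ∀ ε > 0, ∀ᵐ ω ∂P, ∀ᶠ n : ℕ in atTop, ENNReal.ofReal (rexp (n * (L - ε))) ≤ I n ω)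
    (hup : ∀ ε > 0, ∀ᵐ ω ∂P, ∀ᶠ n : ℕ in atTop, I n ω ≤ ENNReal.ofReal (rexp (n * (L + ε)))) :
    ∀ᵐ ω ∂P, HasExpRate (fun n => I n ω) L := by
  have hlow' := ae_all_iff.2 fun m : ℕ => hlow _ (Nat.one_div_pos_of_nat (n := m))
  have hup' := ae_all_iff.2 fun m : ℕ => hup _ (Nat.one_div_pos_of_nat (n := m))
  filter_upwards [hlow', hup'] with ω hω₁ hω₂
  refine hasExpRate_iff.2 fun ε hε => ?_
  obtain ⟨m, hm⟩ := exists_nat_one_div_lt hε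
  filter_upwards [hω₁ m, hω₂ m] with n h₁ h₂
  exact ⟨(ENNReal.ofReal_le_ofReal (by gcongr)).trans h₁,
    h₂.trans (ENNReal.ofReal_le_ofReal (by gcongr))⟩

lemma HasExpRate.tendsto_inv_mul_log_toReal {I : ℕ → ℝ≥0∞} {L : ℝ} (h : HasExpRate I L) :
    Tendsto (fun n : ℕ => (n : ℝ)⁻¹ * Real.log (I n).toReal) atTop (𝓝 L) := by
  have htoReal : ∀ J : ℝ≥0∞, (ENNReal.log J).toReal = Real.log J.toReal := fun J => by
    rcases eq_or_ne J 0 with rfl | h0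
    · simp
    rcases eq_or_ne J ⊤ with rfl | htop
    · simp
    · rw [ENNReal.log_pos_real h0 htop, EReal.toReal_coe]
  refine ((EReal.tendsto_toReal (EReal.coe_ne_top L) (EReal.coe_ne_bot L)).comp h).congr fun n => ?_
  rw [Function.comp_apply, EReal.toReal_mul, htoReal, ← EReal.coe_inv, EReal.toReal_coe]

lemma HasExpRate.le_of_forall_le_rpow_mul_rpow {I J K : ℕ → ℝ≥0∞} {a b c p q : ℝ}
    (hI : HasExpRate I a) (hJ : HasExpRate J b) (hK : HasExpRate K c) (hp : 0 ≤ p) (hq : 0 ≤ q)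
    (h : ∀ n, K n ≤ I n ^ p * J n ^ q) : c ≤ p * a + q * b := by
  refine le_of_forall_pos_le_add fun ε hε => ?_
  set η : ℝ := ε / (1 + p + q)
  have hη : 0 < η := by positivity
  obtain ⟨n, hIn, hJn, hKn, hn⟩ := ((hasExpRate_iff.1 hI η hη).and <|
    (hasExpRate_iff.1 hJ η hη).and <| (hasExpRate_iff.1 hK η hη).and (eventually_gt_atTop 0)).exists
  have hle : ENNReal.ofReal (rexp (n * (c - η))) ≤
      ENNReal.ofReal (rexp (n * (p * (a + η) + q * (b + η)))) := by
    calc ENNReal.ofReal (rexp (n * (c - η))) ≤ I n ^ p * J n ^ q := hKn.1.trans (h n)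
      _ ≤ ENNReal.ofReal (rexp (n * (a + η))) ^ p * ENNReal.ofReal (rexp (n * (b + η))) ^ q := by
        gcongr
        exacts [hIn.2, hJn.2]
      _ = _ := by
        rw [ENNReal.ofReal_rpow_of_pos (exp_pos _), ENNReal.ofReal_rpow_of_pos (exp_pos _),
          ← ENNReal.ofReal_mul (by positivity), ← Real.exp_mul, ← Real.exp_mul, ← Real.exp_add]
        ring_nf
  rw [ENNReal.ofReal_le_ofReal_iff (exp_pos _).le, Real.exp_le_exp] at hle
  have hlin := le_of_mul_le_mul_left hle (by exact_mod_cast hn)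
  have hsum : η * (1 + p + q) = ε := div_mul_cancel₀ _ (by positivity)
  linarith

end ExponentialRate

section LaplaceTransform

variable {α : Type*} [MeasurableSpace α]

lemma lintegral_exp_le_exp_mul {μ : Measure α} {V V' : α → ℝ} {c : ℝ}
    (h : ∀ z, V z ≤ V' z + c) :
    ∫⁻ z, ENNReal.ofReal (rexp (V z)) ∂μ ≤
      ENNReal.ofReal (rexp c) * ∫⁻ z, ENNReal.ofReal (rexp (V' z)) ∂μ := by
  rw [← lintegral_const_mul' _ _ ENNReal.ofReal_ne_top]
  refine lintegral_mono fun z => ?_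
  rw [← ENNReal.ofReal_mul (exp_pos _).le, ← Real.exp_add, add_comm c]
  exact ENNReal.ofReal_le_ofReal (Real.exp_le_exp.2 (h z))

lemma HasExpRate.lintegral_exp_of_abs_sub_le {μ : ℕ → Measure α} {V V' : ℕ → α → ℝ} {L : ℝ}
    (h : HasExpRate (fun n => ∫⁻ z, ENNReal.ofReal (rexp (V n z)) ∂μ n) L)
    (hVV' : ∀ ε > 0, ∀ᶠ n : ℕ in atTop, ∀ z, |V n z - V' n z| ≤ n * ε) :
    HasExpRate (fun n => ∫⁻ z, ENNReal.ofReal (rexp (V' n z)) ∂μ n) L := by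
  refine hasExpRate_iff.2 fun ε hε => ?_
  filter_upwards [hasExpRate_iff.1 h (ε / 2) (half_pos hε), hVV' (ε / 2) (half_pos hε)]
    with n hn hnV
  constructor
  · have hle := hn.1.trans (lintegral_exp_le_exp_mul (V' := V' n) (c := n * (ε / 2))
      fun z => by linarith [(abs_le.1 (hnV z)).2])
    rw [← ENNReal.mul_le_mul_iff_right (a := ENNReal.ofReal (rexp (n * (ε / 2))))
      (ENNReal.ofReal_pos.2 (exp_pos _)).ne' ENNReal.ofReal_ne_top]
    refine le_of_eq_of_le ?_ hle
    rw [← ENNReal.ofReal_mul (exp_pos _).le, ← Real.exp_add]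
    ring_nf
  · calc ∫⁻ z, ENNReal.ofReal (rexp (V' n z)) ∂μ n
        ≤ ENNReal.ofReal (rexp (n * (ε / 2))) * ∫⁻ z, ENNReal.ofReal (rexp (V n z)) ∂μ n :=
          lintegral_exp_le_exp_mul fun z => by linarith [(abs_le.1 (hnV z)).1]
      _ ≤ ENNReal.ofReal (rexp (n * (ε / 2))) * ENNReal.ofReal (rexp (n * (L + ε / 2))) := by
          gcongr
          exact hn.2
      _ = ENNReal.ofReal (rexp (n * (L + ε))) := by
          rw [← ENNReal.ofReal_mul (exp_pos _).le, ← Real.exp_add]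
          ring_nf

lemma lintegral_exp_add_le_rpow_mul_rpow {μ : Measure α} {f g : α → ℝ} (hf : AEMeasurable f μ)
    (hg : AEMeasurable g μ) {p q : ℝ} (hp : 0 ≤ p) (hq : 0 ≤ q) (hpq : p + q = 1) :
    ∫⁻ z, ENNReal.ofReal (rexp (p * f z + q * g z)) ∂μ ≤
      (∫⁻ z, ENNReal.ofReal (rexp (f z)) ∂μ) ^ p * (∫⁻ z, ENNReal.ofReal (rexp (g z)) ∂μ) ^ q := by
  refine le_of_eq_of_le (lintegral_congr fun z => ?_) (ENNReal.lintegral_mul_norm_pow_le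
    hf.exp.ennreal_ofReal hg.exp.ennreal_ofReal hp hq hpq)
  rw [ENNReal.ofReal_rpow_of_pos (exp_pos _), ENNReal.ofReal_rpow_of_pos (exp_pos _),
    ← ENNReal.ofReal_mul (by positivity), ← Real.exp_mul, ← Real.exp_mul, ← Real.exp_add,
    mul_comm p, mul_comm q]

variable {H : Type*} [NormedAddCommGroup H] [InnerProductSpace ℝ H] [MeasurableSpace H]
  [OpensMeasurableSpace H]

lemma lintegral_exp_inner_le_rpow_mul_rpow {μ : Measure α} {S : α → H} (hS : Measurable S)
    {p q : ℝ} (hp : 0 ≤ p) (hq : 0 ≤ q) (hpq : p + q = 1) (x y : H) :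
    ∫⁻ z, ENNReal.ofReal (rexp ⟪p • x + q • y, S z⟫) ∂μ ≤
      (∫⁻ z, ENNReal.ofReal (rexp ⟪x, S z⟫) ∂μ) ^ p *
        (∫⁻ z, ENNReal.ofReal (rexp ⟪y, S z⟫) ∂μ) ^ q := by
  have hinner : ∀ w : H, AEMeasurable (fun z => ⟪w, S z⟫) μ := fun w =>
    ((continuous_const.inner continuous_id).measurable.comp hS).aemeasurable
  simpa only [inner_add_left, real_inner_smul_left] using
    lintegral_exp_add_le_rpow_mul_rpow (hinner x) (hinner y) hp hq hpq

lemma convexOn_log_toReal_lintegral_exp_inner {μ : Measure α} (hμ : μ ≠ 0) {S : α → H}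
    (hS : Measurable S) (hfin : ∀ x : H, ∫⁻ z, ENNReal.ofReal (rexp ⟪x, S z⟫) ∂μ ≠ ⊤) :
    ConvexOn ℝ univ fun x : H => Real.log (∫⁻ z, ENNReal.ofReal (rexp ⟪x, S z⟫) ∂μ).toReal := by
  have hpos : ∀ x : H, 0 < (∫⁻ z, ENNReal.ofReal (rexp ⟪x, S z⟫) ∂μ).toReal := fun x =>
    ENNReal.toReal_pos (fun h0 => hμ <| by
      have hae := (lintegral_eq_zero_iff
        ((continuous_const.inner continuous_id).measurable.comp hS).exp.ennreal_ofReal).1 h0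
      refine ae_eq_bot.1 (eventually_false_iff_eq_bot.1 (hae.mono fun z hz => ?_))
      exact (ENNReal.ofReal_pos.2 (exp_pos _)).ne' hz) (hfin x)
  refine ⟨convex_univ, fun x _ y _ p q hp hq hpq => ?_⟩
  have hle := ENNReal.toReal_mono (ENNReal.mul_ne_top (ENNReal.rpow_ne_top_of_nonneg hp (hfin x))
    (ENNReal.rpow_ne_top_of_nonneg hq (hfin y)))
    (lintegral_exp_inner_le_rpow_mul_rpow (μ := μ) hS hp hq hpq x y)
  rw [ENNReal.toReal_mul, ← ENNReal.toReal_rpow, ← ENNReal.toReal_rpow] at hle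
  have hlog := Real.log_le_log (hpos _) hle
  rwa [Real.log_mul (rpow_pos_of_pos (hpos x) p).ne' (rpow_pos_of_pos (hpos y) q).ne',
    Real.log_rpow (hpos x), Real.log_rpow (hpos y)] at hlog

lemma convexOn_of_hasExpRate_lintegral_exp_inner {μ : ℕ → Measure α} {S : ℕ → α → H}
    (hS : ∀ n, Measurable (S n)) {D : Set H} (hD : Convex ℝ D) {L : H → ℝ}
    (hL : ∀ x ∈ D, HasExpRate (fun n => ∫⁻ z, ENNReal.ofReal (rexp ⟪x, S n z⟫) ∂μ n) (L x)) :
    ConvexOn ℝ D L :=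
  ⟨hD, fun x hx y hy _ _ hp hq hpq =>
    (hL x hx).le_of_forall_le_rpow_mul_rpow (hL y hy) (hL _ (hD hx hy hp hq hpq)) hp hq fun n =>
      lintegral_exp_inner_le_rpow_mul_rpow (hS n) hp hq hpq x y⟩

end LaplaceTransform

section TruncatedMean

variable {α : Type*} [MeasurableSpace α]

lemma lintegral_exp_le_lintegral_min_add {μ : Measure α} {Y : α → ℝ} (hY : Measurable Y) {t : ℝ}
    (ht : 0 ≤ t) (B : ℝ) : ∫⁻ z, ENNReal.ofReal (rexp (Y z)) ∂μ ≤
      ∫⁻ z, ENNReal.ofReal (min (rexp (Y z)) (rexp B)) ∂μ +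
        ENNReal.ofReal (rexp (-(t * B))) * ∫⁻ z, ENNReal.ofReal (rexp ((1 + t) * Y z)) ∂μ := by
  have hmin : Measurable fun z => ENNReal.ofReal (min (rexp (Y z)) (rexp B)) := by fun_prop
  rw [← lintegral_const_mul' _ _ ENNReal.ofReal_ne_top, ← lintegral_add_left hmin]
  refine lintegral_mono fun z => ?_
  rw [← ENNReal.ofReal_mul (exp_pos _).le, ← Real.exp_add]
  rcases le_or_gt (Y z) B with h | h
  · rw [min_eq_left (exp_le_exp.2 h)]
    exact le_self_add
  · exact le_add_left (ENNReal.ofReal_le_ofReal (exp_le_exp.2 (by nlinarith)))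

lemma eventually_exp_le_lintegral_min {μ : ℕ → Measure α} {V : ℕ → α → ℝ}
    (hV : ∀ n, Measurable (V n)) {a a' b t : ℝ} (ht : 0 ≤ t)
    (ha : HasExpRate (fun n => ∫⁻ z, ENNReal.ofReal (rexp (V n z)) ∂μ n) a)
    (ha' : HasExpRate (fun n => ∫⁻ z, ENNReal.ofReal (rexp ((1 + t) * V n z)) ∂μ n) a')
    (hab : a' < a + t * b) {ε : ℝ} (hε : 0 < ε) :
    ∀ᶠ n : ℕ in atTop, ENNReal.ofReal (rexp (n * (a - ε))) ≤
      ∫⁻ z, ENNReal.ofReal (min (rexp (V n z)) (rexp (n * b))) ∂μ n := by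
  obtain ⟨δ, hδ, hδε⟩ : ∃ δ > 0, 2 * δ ≤ ε ∧ 4 * δ ≤ a + t * b - a' :=
    ⟨min (ε / 2) ((a + t * b - a') / 4), lt_min (by linarith) (by linarith),
      by linarith [min_le_left (ε / 2) ((a + t * b - a') / 4)],
      by linarith [min_le_right (ε / 2) ((a + t * b - a') / 4)]⟩
  filter_upwards [hasExpRate_iff.1 ha δ hδ, hasExpRate_iff.1 ha' δ hδ,
    (tendsto_natCast_atTop_atTop.atTop_mul_const hδ).eventually_ge_atTop (1 : ℝ)]
    with n hI hJ hn
  have htail : ENNReal.ofReal (rexp (-(t * (n * b)))) *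
      ∫⁻ z, ENNReal.ofReal (rexp ((1 + t) * V n z)) ∂μ n ≤
        ENNReal.ofReal (rexp (n * (a - 3 * δ))) := by
    refine (mul_le_mul_right hJ.2 _).trans ?_
    rw [← ENNReal.ofReal_mul (exp_pos _).le, ← Real.exp_add]
    refine ENNReal.ofReal_le_ofReal (exp_le_exp.2 ?_)
    nlinarith [mul_le_mul_of_nonneg_left hδε.2 (Nat.cast_nonneg (α := ℝ) n)]
  have hsplit : rexp (n * (a - ε)) + rexp (n * (a - 3 * δ)) ≤ rexp (n * (a - δ)) := by
    have h₁ : rexp (n * (a - ε)) ≤ rexp (n * (a - 2 * δ)) := by gcongr; exact hδε.1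
    have h₃ : rexp (n * (a - 3 * δ)) ≤ rexp (n * (a - 2 * δ)) := by gcongr; norm_num
    have h₂ : rexp (n * (a - δ)) = rexp (n * δ) * rexp (n * (a - 2 * δ)) := by
      rw [← Real.exp_add]; ring_nf
    nlinarith [Real.add_one_le_exp (n * δ), exp_pos (n * (a - 2 * δ))]
  refine (ENNReal.add_le_add_iff_right (ENNReal.ofReal_ne_top (r := rexp (n * (a - 3 * δ))))).1 ?_
  calc ENNReal.ofReal (rexp (n * (a - ε))) + ENNReal.ofReal (rexp (n * (a - 3 * δ)))
      = ENNReal.ofReal (rexp (n * (a - ε)) + rexp (n * (a - 3 * δ))) :=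
        (ENNReal.ofReal_add (exp_pos _).le (exp_pos _).le).symm
    _ ≤ ENNReal.ofReal (rexp (n * (a - δ))) := ENNReal.ofReal_le_ofReal hsplit
    _ ≤ ∫⁻ z, ENNReal.ofReal (rexp (V n z)) ∂μ n := hI.1
    _ ≤ _ := (lintegral_exp_le_lintegral_min_add (hV n) ht _).trans (add_le_add_right htail _)

end TruncatedMean

section RosenblattCoefficient

/-- The Rosenblatt mixing coefficient `α(m₁, m₂)` of two σ-algebras, a measure of their
dependence. -/
noncomputable def rosenblattCoeff {Ω : Type*} {_ : MeasurableSpace Ω} (P : Measure Ω)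
    (m₁ m₂ : MeasurableSpace Ω) : ℝ :=
  sSup {r | ∃ A B : Set Ω, MeasurableSet[m₁] A ∧ MeasurableSet[m₂] B ∧
    r = |P.real A * P.real B - P.real (A ∩ B)|}

variable {Ω : Type*} {m₁ m₂ mΩ : MeasurableSpace Ω} {P : Measure Ω}

lemma rosenblattCoeff_nonneg : 0 ≤ rosenblattCoeff P m₁ m₂ := by
  refine Real.sSup_nonneg ?_
  rintro _ ⟨A, B, -, -, rfl⟩
  exact abs_nonneg _

lemma rosenblattCoeff_le_of_forall {c : ℝ}
    (h : ∀ A B, MeasurableSet[m₁] A → MeasurableSet[m₂] B →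
      |P.real A * P.real B - P.real (A ∩ B)| ≤ c) : rosenblattCoeff P m₁ m₂ ≤ c := by
  refine csSup_le ⟨_, ∅, ∅, @MeasurableSet.empty _ m₁, @MeasurableSet.empty _ m₂, rfl⟩ ?_
  rintro _ ⟨A, B, hA, hB, rfl⟩
  exact h A B hA hB

lemma rosenblattCoeff_comap {Ω' : Type*} {mΩ' : MeasurableSpace Ω'} {X : Ω' → Ω}
    {Q : Measure Ω'} (hX : Measurable X) (hm₁ : m₁ ≤ mΩ) (hm₂ : m₂ ≤ mΩ) :
    rosenblattCoeff Q (m₁.comap X) (m₂.comap X) = rosenblattCoeff (Q.map X) m₁ m₂ := by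
  have hmap {A : Set Ω} (hA : MeasurableSet A) : (Q.map X).real A = Q.real (X ⁻¹' A) :=
    map_measureReal_apply hX hA
  refine congrArg sSup (Set.ext fun r => ⟨?_, ?_⟩)
  · rintro ⟨_, _, ⟨A, hA, rfl⟩, ⟨B, hB, rfl⟩, rfl⟩
    exact ⟨A, B, hA, hB, by
      rw [hmap (hm₁ _ hA), hmap (hm₂ _ hB), hmap ((hm₁ _ hA).inter (hm₂ _ hB)), preimage_inter]⟩
  · rintro ⟨A, B, hA, hB, rfl⟩
    exact ⟨X ⁻¹' A, X ⁻¹' B, ⟨A, hA, rfl⟩, ⟨B, hB, rfl⟩, by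
      rw [hmap (hm₁ _ hA), hmap (hm₂ _ hB), hmap ((hm₁ _ hA).inter (hm₂ _ hB)), preimage_inter]⟩

variable [IsProbabilityMeasure P]

lemma abs_measureReal_mul_sub_inter_le_half (A : Set Ω) {B : Set Ω} (hB : MeasurableSet B) :
    |P.real A * P.real B - P.real (A ∩ B)| ≤ 1 / 2 := by
  have hA := measureReal_inter_add_sdiff (μ := P) (s := A) hB
  have hAB : P.real (A ∩ B) ≤ P.real B := measureReal_mono inter_subset_right
  have hdiff : P.real (A \ B) ≤ P.real Bᶜ := measureReal_mono (sdiff_subset_compl A B)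
  rw [probReal_compl_eq_one_sub hB] at hdiff
  have h₁ : 0 ≤ P.real (A ∩ B) := measureReal_nonneg
  have h₂ : 0 ≤ P.real (A \ B) := measureReal_nonneg
  rw [← hA, abs_le]
  constructor <;> nlinarith [sq_nonneg (P.real B - 1 / 2)]

lemma abs_measureReal_mul_sub_inter_le_rosenblattCoeff (hm₂ : m₂ ≤ mΩ) {A B : Set Ω}
    (hA : MeasurableSet[m₁] A) (hB : MeasurableSet[m₂] B) :
    |P.real A * P.real B - P.real (A ∩ B)| ≤ rosenblattCoeff P m₁ m₂ := by
  refine le_csSup ⟨1 / 2, ?_⟩ ⟨A, B, hA, hB, rfl⟩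
  rintro _ ⟨A', B', -, hB', rfl⟩
  exact abs_measureReal_mul_sub_inter_le_half A' (hm₂ _ hB')

lemma rosenblattCoeff_le_half (hm₂ : m₂ ≤ mΩ) : rosenblattCoeff P m₁ m₂ ≤ 1 / 2 :=
  rosenblattCoeff_le_of_forall fun A _ _ hB => abs_measureReal_mul_sub_inter_le_half A (hm₂ _ hB)

lemma rosenblattCoeff_mono {m₁' m₂' : MeasurableSpace Ω} (hm₂ : m₂ ≤ mΩ) (h₁ : m₁' ≤ m₁)
    (h₂ : m₂' ≤ m₂) : rosenblattCoeff P m₁' m₂' ≤ rosenblattCoeff P m₁ m₂ :=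
  rosenblattCoeff_le_of_forall fun _ _ hA hB =>
    abs_measureReal_mul_sub_inter_le_rosenblattCoeff hm₂ (h₁ _ hA) (h₂ _ hB)

end RosenblattCoefficient

section CovarianceInequality

variable {Ω : Type*} {m m₁ m₂ mΩ : MeasurableSpace Ω} {P : Measure Ω} {U W : Ω → ℝ} {M : ℝ}

-- Both integrals are written as integrals of tails, and the hypothesis is applied to each tail.
lemma lintegral_ofReal_le_of_forall_measure_le (hm : m ≤ mΩ) {ν : Measure Ω} {K c : ℝ≥0∞}
    (h : ∀ A, MeasurableSet[m] A → ν A ≤ K * P A + c) (hU : Measurable[m] U)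
    (hU0 : ∀ ω, 0 ≤ U ω) (hUM : ∀ ω, U ω ≤ M) :
    ∫⁻ ω, ENNReal.ofReal (U ω) ∂ν ≤
      K * ∫⁻ ω, ENNReal.ofReal (U ω) ∂P + ENNReal.ofReal M * c := by
  have hU' : Measurable U := hU.mono hm le_rfl
  have hanti : Measurable fun t : ℝ => P {ω | t < U ω} :=
    Antitone.measurable fun s t hst => measure_mono fun ω (hω : t < U ω) => hst.trans_lt hω
  have htail (t : ℝ) :
      ν {ω | t < U ω} ≤ K * P {ω | t < U ω} + (Iic M).indicator (fun _ => c) t := by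
    by_cases ht : t ≤ M
    · rw [indicator_of_mem (mem_Iic.2 ht)]
      exact h _ (hU measurableSet_Ioi)
    · have hempty : {ω | t < U ω} = ∅ :=
        eq_empty_of_forall_notMem fun ω (hω : t < U ω) => ht (hω.le.trans (hUM ω))
      simp [hempty]
  rw [lintegral_eq_lintegral_meas_lt ν (ae_of_all _ hU0) hU'.aemeasurable,
    lintegral_eq_lintegral_meas_lt P (ae_of_all _ hU0) hU'.aemeasurable]
  calc ∫⁻ t in Ioi 0, ν {ω | t < U ω}
      ≤ ∫⁻ t in Ioi 0, (K * P {ω | t < U ω} + (Iic M).indicator (fun _ => c) t) :=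
        lintegral_mono htail
    _ = K * (∫⁻ t in Ioi 0, P {ω | t < U ω}) + ENNReal.ofReal M * c := by
        rw [lintegral_add_left (hanti.const_mul K), lintegral_const_mul K hanti,
          lintegral_indicator_const measurableSet_Iic,
          Measure.restrict_apply measurableSet_Iic, inter_comm, Ioi_inter_Iic, Real.volume_Ioc,
          sub_zero, mul_comm c]

lemma lintegral_ofReal_mul_le_of_measure_inter_le (hm₁ : m₁ ≤ mΩ) (hm₂ : m₂ ≤ mΩ) {c : ℝ≥0∞}
    (h : ∀ A B, MeasurableSet[m₁] A → MeasurableSet[m₂] B → P (A ∩ B) ≤ P A * P B + c)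
    (hU : Measurable[m₁] U) (hW : Measurable[m₂] W) (hU0 : ∀ ω, 0 ≤ U ω) (hW0 : ∀ ω, 0 ≤ W ω)
    (hUM : ∀ ω, U ω ≤ M) (hWM : ∀ ω, W ω ≤ M) :
    ∫⁻ ω, ENNReal.ofReal (U ω * W ω) ∂P ≤
      (∫⁻ ω, ENNReal.ofReal (U ω) ∂P) * (∫⁻ ω, ENNReal.ofReal (W ω) ∂P) +
        ENNReal.ofReal M * (ENNReal.ofReal M * c) := by
  have hdensity : ∀ A, MeasurableSet[m₁] A →
      P.withDensity (fun ω => ENNReal.ofReal (W ω)) A ≤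
        (∫⁻ ω, ENNReal.ofReal (W ω) ∂P) * P A + ENNReal.ofReal M * c := by
    intro A hA
    rw [withDensity_apply _ (hm₁ _ hA), mul_comm]
    refine lintegral_ofReal_le_of_forall_measure_le hm₂ (fun B hB => ?_) hW hW0 hWM
    rw [Measure.restrict_apply (hm₂ _ hB), inter_comm]
    exact h A B hA hB
  calc ∫⁻ ω, ENNReal.ofReal (U ω * W ω) ∂P
      = ∫⁻ ω, ENNReal.ofReal (U ω) ∂P.withDensity (fun ω => ENNReal.ofReal (W ω)) := by
        rw [lintegral_withDensity_eq_lintegral_mul _ (hW.mono hm₂ le_rfl).ennreal_ofReal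
          (hU.mono hm₁ le_rfl).ennreal_ofReal]
        exact lintegral_congr fun ω => by rw [Pi.mul_apply, mul_comm, ENNReal.ofReal_mul (hW0 ω)]
    _ ≤ _ := by
        rw [mul_comm (∫⁻ ω, ENNReal.ofReal (U ω) ∂P)]
        exact lintegral_ofReal_le_of_forall_measure_le hm₁ hdensity hU hU0 hUM

variable [IsProbabilityMeasure P]

lemma measure_inter_le_mul_add_rosenblattCoeff (hm₂ : m₂ ≤ mΩ) {A B : Set Ω}
    (hA : MeasurableSet[m₁] A) (hB : MeasurableSet[m₂] B) :
    P (A ∩ B) ≤ P A * P B + ENNReal.ofReal (rosenblattCoeff P m₁ m₂) := by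
  have h := (abs_le.1 (abs_measureReal_mul_sub_inter_le_rosenblattCoeff (P := P) hm₂ hA hB)).1
  rw [← ofReal_measureReal, ← ofReal_measureReal (s := A), ← ofReal_measureReal (s := B),
    ← ENNReal.ofReal_mul measureReal_nonneg,
    ← ENNReal.ofReal_add (by positivity) rosenblattCoeff_nonneg]
  exact ENNReal.ofReal_le_ofReal (by linarith)

lemma covariance_le_sq_mul_rosenblattCoeff (hm₁ : m₁ ≤ mΩ) (hm₂ : m₂ ≤ mΩ)
    (hU : Measurable[m₁] U) (hW : Measurable[m₂] W) (hU0 : ∀ ω, 0 ≤ U ω) (hW0 : ∀ ω, 0 ≤ W ω)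
    (hUM : ∀ ω, U ω ≤ M) (hWM : ∀ ω, W ω ≤ M) :
    cov[U, W; P] ≤ M ^ 2 * rosenblattCoeff P m₁ m₂ := by
  have hU2 : MemLp U 2 P := memLp_of_bounded (ae_of_all _ fun ω => ⟨hU0 ω, hUM ω⟩)
    (hU.mono hm₁ le_rfl).aestronglyMeasurable 2
  have hW2 : MemLp W 2 P := memLp_of_bounded (ae_of_all _ fun ω => ⟨hW0 ω, hWM ω⟩)
    (hW.mono hm₂ le_rfl).aestronglyMeasurable 2
  have hM : 0 ≤ M := let ⟨ω⟩ := P.nonempty_of_neZero; (hU0 ω).trans (hUM ω)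
  have hα := rosenblattCoeff_nonneg (P := P) (m₁ := m₁) (m₂ := m₂)
  have h := lintegral_ofReal_mul_le_of_measure_inter_le hm₁ hm₂
    (fun A B hA hB => measure_inter_le_mul_add_rosenblattCoeff (P := P) hm₂ hA hB)
    hU hW hU0 hW0 hUM hWM
  have hUW : Integrable (fun ω => U ω * W ω) P := hU2.integrable_mul hW2
  have hEU : 0 ≤ ∫ ω, U ω ∂P := integral_nonneg hU0
  have hEW : 0 ≤ ∫ ω, W ω ∂P := integral_nonneg hW0
  rw [← ofReal_integral_eq_lintegral_ofReal hUW (ae_of_all _ fun ω => mul_nonneg (hU0 ω) (hW0 ω)),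
    ← ofReal_integral_eq_lintegral_ofReal (hU2.integrable one_le_two) (ae_of_all _ hU0),
    ← ofReal_integral_eq_lintegral_ofReal (hW2.integrable one_le_two) (ae_of_all _ hW0),
    ← ENNReal.ofReal_mul hEU, ← ENNReal.ofReal_mul hM, ← ENNReal.ofReal_mul hM,
    ← ENNReal.ofReal_add (by positivity) (by positivity),
    ENNReal.ofReal_le_ofReal_iff (by positivity)] at h
  rw [covariance_eq_sub hU2 hW2, sub_le_iff_le_add']
  exact h.trans_eq (by ring)

end CovarianceInequality

section StrongMixing

variable {E : Type*} [MeasurableSpace E] {ν : Measure (ℕ → E)}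

/-- The Rosenblatt mixing coefficients `α_{X,m}` of a sequence `X` of random variables with law
`ν`, computed on the canonical space: the dependence between the coordinates up to a time `i` and
the coordinates from time `i + m` on. -/
noncomputable def strongMixingCoeff (ν : Measure (ℕ → E)) : ℕ → ℝ
  | 0 => 1 / 2
  | m + 1 =>
    ⨆ i : ℕ, rosenblattCoeff ν (cylinderEvents (Iic i)) (cylinderEvents (Ici (i + (m + 1))))

lemma strongMixingCoeff_nonneg (m : ℕ) : 0 ≤ strongMixingCoeff ν m := by
  cases m with
  | zero => norm_num [strongMixingCoeff]
  | succ m => exact Real.iSup_nonneg fun _ => rosenblattCoeff_nonneg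

variable [IsProbabilityMeasure ν]

lemma strongMixingCoeff_le_half (m : ℕ) : strongMixingCoeff ν m ≤ 1 / 2 := by
  cases m with
  | zero => exact le_rfl
  | succ m => exact ciSup_le fun i => rosenblattCoeff_le_half cylinderEvents_le_pi

lemma rosenblattCoeff_le_strongMixingCoeff (i m : ℕ) :
    rosenblattCoeff ν (cylinderEvents (Iic i)) (cylinderEvents (Ici (i + m))) ≤
      strongMixingCoeff ν m := by
  cases m with
  | zero => exact rosenblattCoeff_le_half cylinderEvents_le_pi
  | succ m =>
    refine le_ciSup (f := fun i => rosenblattCoeff ν (cylinderEvents (Iic i))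
      (cylinderEvents (Ici (i + (m + 1))))) ⟨1 / 2, ?_⟩ i
    rintro _ ⟨j, rfl⟩
    exact rosenblattCoeff_le_half cylinderEvents_le_pi

lemma antitone_strongMixingCoeff : Antitone (strongMixingCoeff ν) := by
  refine antitone_nat_of_succ_le fun m => ciSup_le fun i => ?_
  exact (rosenblattCoeff_mono cylinderEvents_le_pi le_rfl
    (cylinderEvents_mono (Ici_subset_Ici.2 (by omega)))).trans
      (rosenblattCoeff_le_strongMixingCoeff i m)

end StrongMixing

section SuperpolynomialDecay

variable {a : ℕ → ℝ}

/-- The generalized inverse `u ↦ inf {m | a m ≤ u}` of a sequence, equal to `⊤` where no such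
index exists. -/
noncomputable def generalizedInverse (a : ℕ → ℝ) (u : ℝ) : ℝ≥0∞ :=
  sInf ((fun m : ℕ => (m : ℝ≥0∞)) '' {m | a m ≤ u})

lemma natCast_le_generalizedInverse (ha : Antitone a) {m : ℕ} {u : ℝ} (hu : u < a m) :
    (m : ℝ≥0∞) ≤ generalizedInverse a u := by
  refine le_sInf ?_
  rintro _ ⟨q, hq, rfl⟩
  exact Nat.cast_le.2 (le_of_not_gt fun hqm => (hu.trans_le (ha hqm.le)).not_ge hq)

lemma ofReal_mul_rpow_le_lintegral_generalizedInverse (ha : Antitone a) (ha1 : ∀ m, a m ≤ 1)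
    {h : ℝ} (hh : 0 ≤ h) (m : ℕ) :
    ENNReal.ofReal (a m) * (m : ℝ≥0∞) ^ h ≤ ∫⁻ u in Ioc (0 : ℝ) 1, generalizedInverse a u ^ h := by
  calc ENNReal.ofReal (a m) * (m : ℝ≥0∞) ^ h
      = ∫⁻ _ in Ioo 0 (a m), (m : ℝ≥0∞) ^ h := by
        rw [setLIntegral_const, Real.volume_Ioo, sub_zero, mul_comm]
    _ ≤ ∫⁻ u in Ioo 0 (a m), generalizedInverse a u ^ h :=
        setLIntegral_mono' measurableSet_Ioo fun u hu =>
          ENNReal.rpow_le_rpow (natCast_le_generalizedInverse ha hu.2) hh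
    _ ≤ _ := lintegral_mono_set (Ioo_subset_Ioc_self.trans (Ioc_subset_Ioc_right (ha1 m)))

lemma superpolynomialDecay_of_lintegral_generalizedInverse_lt_top (ha : Antitone a)
    (ha0 : ∀ m, 0 ≤ a m) (ha1 : ∀ m, a m ≤ 1)
    (hint : ∀ h : ℝ, 0 < h → ∫⁻ u in Ioc (0 : ℝ) 1, generalizedInverse a u ^ h < ⊤) :
    Asymptotics.SuperpolynomialDecay atTop (fun m : ℕ => (m : ℝ)) a := by
  intro z
  set I := ∫⁻ u in Ioc (0 : ℝ) 1, generalizedInverse a u ^ ((z + 1 : ℕ) : ℝ)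
  have hbound (m : ℕ) : a m * (m : ℝ) ^ (z + 1) ≤ I.toReal := by
    have h := ofReal_mul_rpow_le_lintegral_generalizedInverse ha ha1
      (Nat.cast_nonneg (α := ℝ) (z + 1)) m
    rw [ENNReal.rpow_natCast, ← ENNReal.ofReal_natCast, ← ENNReal.ofReal_pow (Nat.cast_nonneg m),
      ← ENNReal.ofReal_mul (ha0 m)] at h
    exact (ENNReal.ofReal_le_iff_le_toReal (hint _ (by positivity)).ne).1 h
  refine squeeze_zero' (.of_forall fun m => mul_nonneg (by positivity) (ha0 m)) ?_
    (tendsto_const_div_atTop_nhds_zero_nat I.toReal)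
  filter_upwards [eventually_gt_atTop 0] with m hm
  rw [le_div_iff₀ (Nat.cast_pos.2 hm)]
  exact (hbound m).trans_eq' (by ring)

lemma superpolynomialDecay_strongMixingCoeff {E : Type*} [MeasurableSpace E]
    {ν : Measure (ℕ → E)} [IsProbabilityMeasure ν] (hint : ∀ h : ℝ, 0 < h →
      ∫⁻ u in Ioc (0 : ℝ) 1, generalizedInverse (strongMixingCoeff ν) u ^ h < ⊤) :
    Asymptotics.SuperpolynomialDecay atTop (fun m : ℕ => (m : ℝ)) (strongMixingCoeff ν) :=
  superpolynomialDecay_of_lintegral_generalizedInverse_lt_top antitone_strongMixingCoeff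
    strongMixingCoeff_nonneg (fun m => (strongMixingCoeff_le_half m).trans (by norm_num)) hint

lemma eventually_ceil_exp_le_exp_neg
    (ha : Asymptotics.SuperpolynomialDecay atTop (fun m : ℕ => (m : ℝ)) a) (R : ℝ) {η : ℝ}
    (hη : 0 < η) : ∀ᶠ n : ℕ in atTop, a ⌈rexp (n * η)⌉₊ ≤ rexp (-(n * R)) := by
  obtain ⟨z, hz⟩ := exists_nat_ge (R / η)
  rw [div_le_iff₀ hη] at hz
  have hceil : Tendsto (fun n : ℕ => ⌈rexp (n * η)⌉₊) atTop atTop :=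
    tendsto_nat_ceil_atTop.comp (tendsto_exp_atTop.comp
      (tendsto_natCast_atTop_atTop.atTop_mul_const hη))
  filter_upwards [hceil.eventually ((ha z).eventually_le_const one_pos)] with n hn
  have hpow : rexp (n * R) ≤ (⌈rexp (n * η)⌉₊ : ℝ) ^ z := by
    calc rexp (n * R) ≤ rexp (n * (z * η)) := by gcongr
      _ = rexp (n * η) ^ z := by rw [← Real.exp_nat_mul]; ring_nf
      _ ≤ _ := by gcongr; exact Nat.le_ceil _
  calc a ⌈rexp (n * η)⌉₊ ≤ ((⌈rexp (n * η)⌉₊ : ℝ) ^ z)⁻¹ := by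
        rwa [← one_div, le_div_iff₀' ((exp_pos _).trans_le hpow)]
    _ ≤ (rexp (n * R))⁻¹ := inv_anti₀ (exp_pos _) hpow
    _ = rexp (-(n * R)) := (Real.exp_neg _).symm

end SuperpolynomialDecay

section SecondMoment

variable {Ω : Type*} {mΩ : MeasurableSpace Ω} {P : Measure Ω} [IsProbabilityMeasure P]

lemma covariance_le_mul_integral {U W : Ω → ℝ} {M : ℝ} (hU : MemLp U 2 P) (hW : MemLp W 2 P)
    (hU0 : ∀ ω, 0 ≤ U ω) (hW0 : ∀ ω, 0 ≤ W ω) (hUM : ∀ ω, U ω ≤ M) :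
    cov[U, W; P] ≤ M * ∫ ω, W ω ∂P := by
  have hmean : 0 ≤ (∫ ω, U ω ∂P) * ∫ ω, W ω ∂P :=
    mul_nonneg (integral_nonneg hU0) (integral_nonneg hW0)
  calc cov[U, W; P] = ∫ ω, U ω * W ω ∂P - (∫ ω, U ω ∂P) * ∫ ω, W ω ∂P := covariance_eq_sub hU hW
    _ ≤ ∫ ω, U ω * W ω ∂P := sub_le_self _ hmean
    _ ≤ ∫ ω, M * W ω ∂P := integral_mono (hU.integrable_mul hW)
        ((hW.integrable one_le_two).const_mul M)
        fun ω => mul_le_mul_of_nonneg_right (hUM ω) (hW0 ω)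
    _ = M * ∫ ω, W ω ∂P := integral_const_mul _ _

variable {W : ℕ → Ω → ℝ} {L : ℕ} {v β : ℝ}

lemma variance_sum_range_le (hW : ∀ i, MemLp (W i) 2 P) (hv : 0 ≤ v) (hβ : 0 ≤ β)
    (hnear : ∀ i j, cov[W i, W j; P] ≤ v) (hfar : ∀ i j, i + L ≤ j → cov[W i, W j; P] ≤ β)
    (k : ℕ) : Var[fun ω => ∑ i ∈ Finset.range k, W i ω; P] ≤ k * (2 * L * v + k * β) := by
  have hpair (i j : ℕ) :
      cov[W i, W j; P] ≤ β + if j ∈ Finset.Ico (i + 1 - L) (i + L) then v else 0 := by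
    split_ifs with hij
    · exact (hnear i j).trans (le_add_of_nonneg_left hβ)
    · rw [Finset.mem_Ico, not_and_or, not_le, not_lt] at hij
      rw [add_zero]
      rcases hij with hij | hij
      · exact covariance_comm (W i) (W j) ▸ hfar j i (by omega)
      · exact hfar i j hij
  have hrow (i : ℕ) : ∑ j ∈ Finset.range k, cov[W i, W j; P] ≤ 2 * L * v + k * β := by
    have hcard : (((Finset.range k).filter (· ∈ Finset.Ico (i + 1 - L) (i + L))).card : ℝ) ≤
        2 * L := by
      have h := Finset.card_le_card (s := (Finset.range k).filter
        (· ∈ Finset.Ico (i + 1 - L) (i + L))) fun j hj => (Finset.mem_filter.1 hj).2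
      rw [Nat.card_Ico] at h
      exact_mod_cast h.trans (by omega : i + L - (i + 1 - L) ≤ 2 * L)
    calc ∑ j ∈ Finset.range k, cov[W i, W j; P]
        ≤ ∑ j ∈ Finset.range k, (β + if j ∈ Finset.Ico (i + 1 - L) (i + L) then v else 0) :=
          Finset.sum_le_sum fun j _ => hpair i j
      _ = ((Finset.range k).filter (· ∈ Finset.Ico (i + 1 - L) (i + L))).card * v + k * β := by
          rw [Finset.sum_add_distrib, ← Finset.sum_filter, Finset.sum_const, Finset.sum_const,
            Finset.card_range, nsmul_eq_mul, nsmul_eq_mul, add_comm]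
      _ ≤ 2 * L * v + k * β := by gcongr
  rw [variance_fun_sum' fun i _ => hW i]
  calc ∑ i ∈ Finset.range k, ∑ j ∈ Finset.range k, cov[W i, W j; P]
      ≤ ∑ _i ∈ Finset.range k, (2 * L * v + k * β) := Finset.sum_le_sum fun i _ => hrow i
    _ = k * (2 * L * v + k * β) := by rw [Finset.sum_const, Finset.card_range, nsmul_eq_mul]

lemma measure_average_lt_half_mean_le {M m : ℝ} (hW : ∀ i, Measurable (W i))
    (hW0 : ∀ i ω, 0 ≤ W i ω) (hWM : ∀ i ω, W i ω ≤ M) (hm : 0 < m)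
    (hmean : ∀ i, ∫ ω, W i ω ∂P = m) (hβ : 0 ≤ β)
    (hfar : ∀ i j, i + L ≤ j → cov[W i, W j; P] ≤ β) {k : ℕ} (hk : 0 < k) :
    P {ω | (k : ℝ)⁻¹ * ∑ i ∈ Finset.range k, W i ω < m / 2} ≤
      ENNReal.ofReal (4 * (2 * L * (M / (k * m)) + β / m ^ 2)) := by
  have hk' : (0 : ℝ) < k := by exact_mod_cast hk
  have hM : 0 ≤ M := let ⟨ω⟩ := P.nonempty_of_neZero; (hW0 0 ω).trans (hWM 0 ω)
  have hW2 (i : ℕ) : MemLp (W i) 2 P := memLp_of_bounded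
    (ae_of_all _ fun ω => ⟨hW0 i ω, hWM i ω⟩) (hW i).aestronglyMeasurable 2
  have hnear (i j : ℕ) : cov[W i, W j; P] ≤ M * m :=
    hmean j ▸ covariance_le_mul_integral (hW2 i) (hW2 j) (hW0 i) (hW0 j) (hWM i)
  have hvar := variance_sum_range_le hW2 (by positivity) hβ hnear hfar k
  set S : Ω → ℝ := fun ω => ∑ i ∈ Finset.range k, W i ω
  have hS2 : MemLp S 2 P := memLp_finsetSum _ fun i _ => hW2 i
  have hSmean : ∫ ω, S ω ∂P = k * m := by
    rw [integral_finsetSum _ fun i _ => (hW2 i).integrable one_le_two]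
    simp only [hmean, Finset.sum_const, Finset.card_range, nsmul_eq_mul]
  have hsub : {ω | (k : ℝ)⁻¹ * S ω < m / 2} ⊆ {ω | k * m / 2 ≤ |S ω - ∫ ω, S ω ∂P|} := by
    intro ω (hω : (k : ℝ)⁻¹ * S ω < m / 2)
    rw [inv_mul_lt_iff₀ hk'] at hω
    rw [mem_ofPred_eq, hSmean]
    exact le_abs.2 (Or.inr (by linarith))
  calc P {ω | (k : ℝ)⁻¹ * S ω < m / 2}
      ≤ P {ω | k * m / 2 ≤ |S ω - ∫ ω, S ω ∂P|} := measure_mono hsub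
    _ ≤ ENNReal.ofReal (Var[S; P] / (k * m / 2) ^ 2) :=
        meas_ge_le_variance_div_sq hS2 (by positivity)
    _ ≤ ENNReal.ofReal (k * (2 * L * (M * m) + k * β) / (k * m / 2) ^ 2) := by gcongr
    _ = ENNReal.ofReal (4 * (2 * L * (M / (k * m)) + β / m ^ 2)) := by
        congr 1
        field_simp
        ring

end SecondMoment

section BorelCantelli

variable {Ω : Type*} {mΩ : MeasurableSpace Ω} {P : Measure Ω}

lemma ae_eventually_notMem_of_measure_le_exp {s : ℕ → Set Ω} {C c : ℝ} (hc : 0 < c)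
    (h : ∀ᶠ n : ℕ in atTop, P (s n) ≤ ENNReal.ofReal (C * rexp (-(n * c)))) :
    ∀ᵐ ω ∂P, ∀ᶠ n in atTop, ω ∉ s n := by
  obtain ⟨N, hN⟩ := eventually_atTop.1 h
  have hsum : Summable fun n : ℕ => |C| * rexp (-(n * c)) :=
    ((Real.summable_exp_nat_mul_iff.2 (neg_lt_zero.2 hc)).mul_left _).congr fun n => by
      rw [mul_neg]
  have htail : ∑' n, P (s (n + N)) ≠ ∞ := by
    refine ne_top_of_le_ne_top ((summable_nat_add_iff N).2 hsum).tsum_ofReal_ne_top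
      (ENNReal.tsum_le_tsum fun n => (hN (n + N) (N.le_add_left n)).trans ?_)
    exact ENNReal.ofReal_le_ofReal (by gcongr; exact le_abs_self C)
  filter_upwards [ae_eventually_notMem htail] with ω hω
  rwa [← map_add_atTop_eq_nat N, eventually_map]

lemma ae_eventually_le_exp_of_lintegral_le_exp {A : ℕ → Ω → ℝ≥0∞} (hA : ∀ n, Measurable (A n))
    {a b : ℝ} (hab : a < b)
    (h : ∀ᶠ n : ℕ in atTop, ∫⁻ ω, A n ω ∂P ≤ ENNReal.ofReal (rexp (n * a))) :
    ∀ᵐ ω ∂P, ∀ᶠ n : ℕ in atTop, A n ω ≤ ENNReal.ofReal (rexp (n * b)) := by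
  have hmarkov : ∀ᶠ n : ℕ in atTop, P {ω | ENNReal.ofReal (rexp (n * b)) ≤ A n ω} ≤
      ENNReal.ofReal (1 * rexp (-(n * (b - a)))) := by
    filter_upwards [h] with n hn
    calc P {ω | ENNReal.ofReal (rexp (n * b)) ≤ A n ω}
        ≤ (∫⁻ ω, A n ω ∂P) / ENNReal.ofReal (rexp (n * b)) :=
          meas_ge_le_lintegral_div (hA n).aemeasurable
            (ENNReal.ofReal_pos.2 (exp_pos _)).ne' ENNReal.ofReal_ne_top
      _ ≤ ENNReal.ofReal (rexp (n * a)) / ENNReal.ofReal (rexp (n * b)) := by gcongr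
      _ = ENNReal.ofReal (1 * rexp (-(n * (b - a)))) := by
          rw [← ENNReal.ofReal_div_of_pos (exp_pos _), ← Real.exp_sub, one_mul]
          ring_nf
  filter_upwards [ae_eventually_notMem_of_measure_le_exp (sub_pos.2 hab) hmarkov] with ω hω
  filter_upwards [hω] with n hn
  exact (not_le.1 hn).le

end BorelCantelli

section BlockAverages

variable {E : Type*} [MeasurableSpace E] {ν : Measure (ℕ → E)}

/-- The `m`-fold shift `T^m` on sequences. -/
def shift (m : ℕ) (x : ℕ → E) : ℕ → E := fun i => x (i + m)

lemma measurable_shift_cylinderEvents {S S' : Set ℕ} {m : ℕ} (h : ∀ i ∈ S, i + m ∈ S') :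
    Measurable[cylinderEvents S', cylinderEvents S] (shift m : (ℕ → E) → ℕ → E) :=
  measurable_cylinderEvents_iff.2 fun i hi => measurable_cylinderEvent_apply (h i hi)

lemma measurable_shift (m : ℕ) : Measurable (shift m : (ℕ → E) → ℕ → E) :=
  measurable_pi_lambda _ fun _ => measurable_pi_apply _

lemma measurePreserving_shift (hν : MeasurePreserving (shift 1) ν ν) (m : ℕ) :
    MeasurePreserving (shift m) ν ν := by
  convert hν.iterate m
  induction m with
  | zero => rfl
  | succ m ih =>
    rw [Function.iterate_succ', ← ih]
    funext x i
    simp only [shift, Function.comp_apply]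
    ring_nf

/-- The empirical measure of the `k` consecutive blocks of length `n` of a sequence `x`: the average
of the Dirac masses at `x, T^n x, …, T^((k - 1) n) x`. Its image under `S_nΦ / n` is the empirical
measure `μ_n^ω`. -/
noncomputable def empiricalBlockMeasure (n k : ℕ) (x : ℕ → E) : Measure (ℕ → E) :=
  (k : ℝ≥0∞)⁻¹ • ∑ j ∈ Finset.range k, Measure.dirac (shift (j * n) x)

lemma lintegral_empiricalBlockMeasure (n k : ℕ) (x : ℕ → E) {f : (ℕ → E) → ℝ≥0∞}
    (hf : Measurable f) : ∫⁻ z, f z ∂empiricalBlockMeasure n k x =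
      (k : ℝ≥0∞)⁻¹ * ∑ j ∈ Finset.range k, f (shift (j * n) x) := by
  rw [empiricalBlockMeasure, lintegral_smul_measure, lintegral_finsetSum_measure, smul_eq_mul]
  simp only [lintegral_dirac' _ hf]

lemma lintegral_ofReal_empiricalBlockMeasure (n : ℕ) {k : ℕ} (hk : 0 < k) (x : ℕ → E)
    {f : (ℕ → E) → ℝ} (hf : Measurable f) (hf0 : ∀ z, 0 ≤ f z) :
    ∫⁻ z, ENNReal.ofReal (f z) ∂empiricalBlockMeasure n k x =
      ENNReal.ofReal ((k : ℝ)⁻¹ * ∑ j ∈ Finset.range k, f (shift (j * n) x)) := by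
  rw [lintegral_empiricalBlockMeasure n k x hf.ennreal_ofReal, ENNReal.ofReal_mul (by positivity),
    ENNReal.ofReal_inv_of_pos (by exact_mod_cast hk), ENNReal.ofReal_natCast,
    ENNReal.ofReal_sum_of_nonneg fun j _ => hf0 _]

lemma isProbabilityMeasure_empiricalBlockMeasure (n : ℕ) {k : ℕ} (hk : 0 < k) (x : ℕ → E) :
    IsProbabilityMeasure (empiricalBlockMeasure n k x) where
  measure_univ := by
    rw [← lintegral_one, lintegral_empiricalBlockMeasure n k x measurable_const,
      Finset.sum_const, Finset.card_range, nsmul_one]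
    exact ENNReal.inv_mul_cancel (by exact_mod_cast hk.ne') (ENNReal.natCast_ne_top k)

lemma measurable_lintegral_empiricalBlockMeasure (n k : ℕ) {f : (ℕ → E) → ℝ≥0∞}
    (hf : Measurable f) : Measurable fun x => ∫⁻ z, f z ∂empiricalBlockMeasure n k x := by
  simp only [lintegral_empiricalBlockMeasure n k _ hf]
  exact (Finset.measurable_sum _ fun j _ => hf.comp (measurable_shift _)).const_mul _

lemma lintegral_lintegral_empiricalBlockMeasure (hν : MeasurePreserving (shift 1) ν ν) (n : ℕ)
    {k : ℕ} (hk : 0 < k) {f : (ℕ → E) → ℝ≥0∞} (hf : Measurable f) :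
    ∫⁻ x, ∫⁻ z, f z ∂empiricalBlockMeasure n k x ∂ν = ∫⁻ z, f z ∂ν := by
  have hcomp (m : ℕ) : Measurable fun x => f (shift m x) := hf.comp (measurable_shift m)
  have hshift (m : ℕ) : ∫⁻ x, f (shift m x) ∂ν = ∫⁻ z, f z ∂ν :=
    (measurePreserving_shift hν m).lintegral_comp hf
  simp only [lintegral_empiricalBlockMeasure n k _ hf]
  rw [lintegral_const_mul _ (Finset.measurable_sum _ fun j _ => hcomp _),
    lintegral_finsetSum _ fun j _ => hcomp _]
  simp only [hshift, Finset.sum_const, Finset.card_range, nsmul_eq_mul]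
  rw [← mul_assoc, ENNReal.inv_mul_cancel (by exact_mod_cast hk.ne') (ENNReal.natCast_ne_top k),
    one_mul]

variable [IsProbabilityMeasure ν]

lemma covariance_comp_shift_le {U : (ℕ → E) → ℝ} {M : ℝ} {w g i j : ℕ}
    (hU : Measurable[cylinderEvents (Iio w)] U) (hU0 : ∀ z, 0 ≤ U z) (hUM : ∀ z, U z ≤ M)
    (hij : i + w + g ≤ j) :
    cov[fun x => U (shift i x), fun x => U (shift j x); ν] ≤ M ^ 2 * strongMixingCoeff ν g := by
  have hpast : Measurable[cylinderEvents (Iic (i + w))] fun x => U (shift i x) :=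
    hU.comp (measurable_shift_cylinderEvents fun l (hl : l < w) => by simp only [mem_Iic]; omega)
  have hfuture : Measurable[cylinderEvents (Ici (i + w + g))] fun x => U (shift j x) :=
    hU.comp (measurable_shift_cylinderEvents fun l _ => by simp only [mem_Ici]; omega)
  exact (covariance_le_sq_mul_rosenblattCoeff cylinderEvents_le_pi cylinderEvents_le_pi hpast
    hfuture (fun _ => hU0 _) (fun _ => hU0 _) (fun _ => hUM _) fun _ => hUM _).trans
      (mul_le_mul_of_nonneg_left (rosenblattCoeff_le_strongMixingCoeff _ g) (sq_nonneg M))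

lemma measure_blockAverage_lt_half_mean_le (hν : MeasurePreserving (shift 1) ν ν)
    {U : (ℕ → E) → ℝ} {M : ℝ} {n k w g L : ℕ} (hU : Measurable[cylinderEvents (Iio w)] U)
    (hU0 : ∀ z, 0 ≤ U z) (hUM : ∀ z, U z ≤ M) (hmean : 0 < ∫ z, U z ∂ν) (hL : w + g ≤ L * n)
    (hk : 0 < k) :
    ν {x | (k : ℝ)⁻¹ * ∑ j ∈ Finset.range k, U (shift (j * n) x) < (∫ z, U z ∂ν) / 2} ≤
      ENNReal.ofReal (4 * (2 * L * (M / (k * ∫ z, U z ∂ν)) +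
        M ^ 2 * strongMixingCoeff ν g / (∫ z, U z ∂ν) ^ 2)) := by
  have hU' : Measurable U := hU.mono cylinderEvents_le_pi le_rfl
  refine measure_average_lt_half_mean_le (W := fun j x => U (shift (j * n) x))
    (fun j => hU'.comp (measurable_shift _)) (fun _ _ => hU0 _) (fun _ _ => hUM _) hmean
    (fun j => ?_) (mul_nonneg (sq_nonneg M) (strongMixingCoeff_nonneg g)) (fun i j hij => ?_) hk
  · rw [← integral_map (measurable_shift _).aemeasurable hU'.aestronglyMeasurable,
      (measurePreserving_shift hν (j * n)).map_eq]
  · refine covariance_comp_shift_le hU hU0 hUM ?_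
    calc i * n + w + g ≤ i * n + L * n := by omega
      _ = (i + L) * n := (add_mul i L n).symm
      _ ≤ j * n := Nat.mul_le_mul_right n hij

end BlockAverages

section EmpiricalRate

variable {E : Type*} [MeasurableSpace E] {ν : Measure (ℕ → E)} [IsProbabilityMeasure ν]

-- The gap `⌈e^{nη}⌉` between blocks is long enough for the mixing coefficient to beat the variance
-- `e^{2n(b - a)}` of one block, and short enough compared with the number `e^{nκ}` of blocks.
lemma eventually_measure_blockAverage_lt_le (hν : MeasurePreserving (shift 1) ν ν)
    (hmix : Asymptotics.SuperpolynomialDecay atTop (fun m : ℕ => (m : ℝ)) (strongMixingCoeff ν))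
    {k : ℕ → ℕ} {κ : ℝ} (hkκ : ∀ᶠ n : ℕ in atTop, rexp (n * κ) ≤ k n) {U : ℕ → (ℕ → E) → ℝ}
    (hU : ∀ n, Measurable[cylinderEvents (Iio (2 * n))] (U n)) (hU0 : ∀ n z, 0 ≤ U n z) {a b : ℝ}
    (hUb : ∀ n z, U n z ≤ rexp (n * b)) (hUa : ∀ᶠ n : ℕ in atTop, rexp (n * a) ≤ ∫ z, U n z ∂ν)
    {η : ℝ} (hη : 0 < η) (hκ : b - a + 2 * η ≤ κ) :
    ∀ᶠ n : ℕ in atTop,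
      ν {x | (k n : ℝ)⁻¹ * ∑ j ∈ Finset.range (k n), U n (shift (j * n) x) < rexp (n * a) / 2} ≤
        ENNReal.ofReal (36 * rexp (-(n * η))) := by
  filter_upwards [hkκ, hUa, eventually_ceil_exp_le_exp_neg hmix (2 * (b - a) + η) hη,
    eventually_ge_atTop 1] with n hk hmean hα hn
  set g := ⌈rexp (n * η)⌉₊
  set m := ∫ z, U n z ∂ν
  have hm : 0 < m := (exp_pos _).trans_le hmean
  have hk0 : (0 : ℝ) < k n := (exp_pos _).trans_le hk
  have hL : ((g + 2 : ℕ) : ℝ) ≤ 4 * rexp (n * η) := by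
    have hg : (g : ℝ) < rexp (n * η) + 1 := Nat.ceil_lt_add_one (exp_pos _).le
    have h1 : 1 ≤ rexp (n * η) := one_le_exp (by positivity)
    push_cast
    linarith
  have hnear : rexp (n * b) / (k n * m) ≤ rexp (-(n * η)) * rexp (-(n * η)) := by
    rw [div_le_iff₀ (by positivity)]
    calc rexp (n * b) ≤ rexp (-(n * η)) * rexp (-(n * η)) * (rexp (n * κ) * rexp (n * a)) := by
          rw [← Real.exp_add, ← Real.exp_add, ← Real.exp_add, exp_le_exp]
          nlinarith [mul_le_mul_of_nonneg_left hκ (Nat.cast_nonneg (α := ℝ) n)]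
      _ ≤ _ := by gcongr
  have hfar : rexp (n * b) ^ 2 * strongMixingCoeff ν g / m ^ 2 ≤ rexp (-(n * η)) := by
    rw [div_le_iff₀ (by positivity)]
    calc rexp (n * b) ^ 2 * strongMixingCoeff ν g
        ≤ rexp (n * b) ^ 2 * rexp (-(n * (2 * (b - a) + η))) := by gcongr
      _ = rexp (-(n * η)) * rexp (n * a) ^ 2 := by
          rw [← Real.exp_nat_mul, ← Real.exp_nat_mul, ← Real.exp_add, ← Real.exp_add]
          push_cast; ring_nf
      _ ≤ _ := by gcongr
  calc _ ≤ ν {x | (k n : ℝ)⁻¹ * ∑ j ∈ Finset.range (k n), U n (shift (j * n) x) < m / 2} :=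
        measure_mono fun x (hx : _ < _) => hx.trans_le (div_le_div_of_nonneg_right hmean two_pos.le)
    _ ≤ _ := measure_blockAverage_lt_half_mean_le (g := g) (L := g + 2) hν (hU n) (hU0 n) (hUb n)
        hm (by nlinarith) (Nat.cast_pos.1 hk0)
    _ ≤ _ := ENNReal.ofReal_le_ofReal ?_
  have hcancel : rexp (n * η) * rexp (-(n * η)) = 1 := by
    rw [← Real.exp_add, add_neg_cancel, exp_zero]
  calc 4 * (2 * ((g + 2 : ℕ) : ℝ) * (rexp (n * b) / (k n * m)) +
        rexp (n * b) ^ 2 * strongMixingCoeff ν g / m ^ 2)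
      ≤ 4 * (2 * (4 * rexp (n * η)) * (rexp (-(n * η)) * rexp (-(n * η))) + rexp (-(n * η))) := by
        gcongr
    _ = 36 * rexp (-(n * η)) := by
        linear_combination 32 * rexp (-(n * η)) * hcancel

lemma ae_eventually_half_exp_le_lintegral_empiricalBlockMeasure
    (hν : MeasurePreserving (shift 1) ν ν)
    (hmix : Asymptotics.SuperpolynomialDecay atTop (fun m : ℕ => (m : ℝ)) (strongMixingCoeff ν))
    {k : ℕ → ℕ} (hk : ∀ n, 0 < k n) {κ : ℝ} (hkκ : ∀ᶠ n : ℕ in atTop, rexp (n * κ) ≤ k n)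
    {U : ℕ → (ℕ → E) → ℝ} (hU : ∀ n, Measurable[cylinderEvents (Iio (2 * n))] (U n))
    (hU0 : ∀ n z, 0 ≤ U n z) {a b : ℝ} (hUb : ∀ n z, U n z ≤ rexp (n * b)) (hκ : b - a < κ)
    (hUa : ∀ᶠ n : ℕ in atTop,
      ENNReal.ofReal (rexp (n * a)) ≤ ∫⁻ z, ENNReal.ofReal (U n z) ∂ν) :
    ∀ᵐ x ∂ν, ∀ᶠ n : ℕ in atTop, ENNReal.ofReal (rexp (n * a) / 2) ≤
      ∫⁻ z, ENNReal.ofReal (U n z) ∂empiricalBlockMeasure n (k n) x := by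
  have hU' (n : ℕ) : Measurable (U n) := (hU n).mono cylinderEvents_le_pi le_rfl
  have hUint (n : ℕ) : Integrable (U n) ν :=
    .of_bound (hU' n).aestronglyMeasurable (rexp (n * b)) <|
      ae_of_all _ fun z => (abs_of_nonneg (hU0 n z)).trans_le (hUb n z)
  simp only [← ofReal_integral_eq_lintegral_ofReal (hUint _) (ae_of_all _ (hU0 _)),
    ENNReal.ofReal_le_ofReal_iff (integral_nonneg (hU0 _))] at hUa
  filter_upwards [ae_eventually_notMem_of_measure_le_exp (half_pos (sub_pos.2 hκ))
    (eventually_measure_blockAverage_lt_le hν hmix hkκ hU hU0 hUb hUa (half_pos (sub_pos.2 hκ))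
      (by linarith))] with x hx
  filter_upwards [hx] with n hn
  rw [lintegral_ofReal_empiricalBlockMeasure n (hk n) x (hU' n) (hU0 n)]
  exact ENNReal.ofReal_le_ofReal (not_lt.1 hn)

lemma ae_hasExpRate_lintegral_empiricalBlockMeasure_of_cylinder
    (hν : MeasurePreserving (shift 1) ν ν)
    (hmix : Asymptotics.SuperpolynomialDecay atTop (fun m : ℕ => (m : ℝ)) (strongMixingCoeff ν))
    {k : ℕ → ℕ} (hk : ∀ n, 0 < k n) {κ : ℝ} (hkκ : ∀ᶠ n : ℕ in atTop, rexp (n * κ) ≤ k n)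
    {V : ℕ → (ℕ → E) → ℝ} (hV : ∀ n, Measurable[cylinderEvents (Iio (2 * n))] (V n))
    {a a' b t : ℝ} (ht : 0 ≤ t)
    (ha : HasExpRate (fun n => ∫⁻ z, ENNReal.ofReal (rexp (V n z)) ∂ν) a)
    (ha' : HasExpRate (fun n => ∫⁻ z, ENNReal.ofReal (rexp ((1 + t) * V n z)) ∂ν) a')
    (hab : a' < a + t * b) (hκ : b - a < κ) :
    ∀ᵐ x ∂ν, HasExpRate
      (fun n => ∫⁻ z, ENNReal.ofReal (rexp (V n z)) ∂empiricalBlockMeasure n (k n) x) a := by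
  have hV' (n : ℕ) : Measurable (V n) := (hV n).mono cylinderEvents_le_pi le_rfl
  have hexp (n : ℕ) : Measurable fun z => ENNReal.ofReal (rexp (V n z)) :=
    (measurable_exp.comp (hV' n)).ennreal_ofReal
  refine ae_hasExpRate (fun ε hε => ?_) fun ε hε => ?_
  · obtain ⟨δ, hδ, hδε, hδκ⟩ : ∃ δ > 0, δ < ε ∧ b - (a - δ) < κ :=
      ⟨min (ε / 2) ((κ - (b - a)) / 2), lt_min (by linarith) (by linarith),
        (min_le_left _ _).trans_lt (by linarith),
        by linarith [min_le_right (ε / 2) ((κ - (b - a)) / 2)]⟩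
    have hU (n : ℕ) : Measurable[cylinderEvents (Iio (2 * n))]
        fun z => min (rexp (V n z)) (rexp (n * b)) :=
      (measurable_exp.comp (hV n)).min measurable_const
    filter_upwards [ae_eventually_half_exp_le_lintegral_empiricalBlockMeasure hν hmix hk hkκ hU
      (fun n z => le_min (exp_pos _).le (exp_pos _).le) (fun n z => min_le_right _ _) hδκ
      (eventually_exp_le_lintegral_min hV' ht ha ha' hab hδ)] with x hx
    filter_upwards [hx, (tendsto_natCast_atTop_atTop.atTop_mul_const
      (sub_pos.2 hδε)).eventually_ge_atTop (1 : ℝ)] with n hn hnδ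
    have hhalf : rexp (n * (a - ε)) ≤ rexp (n * (a - δ)) / 2 := by
      rw [le_div_iff₀ two_pos, show n * (a - δ) = n * (a - ε) + n * (ε - δ) by ring, Real.exp_add]
      exact mul_le_mul_of_nonneg_left (by linarith [Real.add_one_le_exp (n * (ε - δ))])
        (exp_pos _).le
    exact (ENNReal.ofReal_le_ofReal hhalf).trans (hn.trans
      (lintegral_mono fun z => ENNReal.ofReal_le_ofReal (min_le_left _ _)))
  · refine ae_eventually_le_exp_of_lintegral_le_exp (a := a + ε / 2) (b := a + ε)
      (fun n => measurable_lintegral_empiricalBlockMeasure n (k n) (hexp n)) (by linarith) ?_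
    filter_upwards [hasExpRate_iff.1 ha (ε / 2) (half_pos hε)] with n hn
    rw [lintegral_lintegral_empiricalBlockMeasure hν n (hk n) (hexp n)]
    exact hn.2

lemma ae_hasExpRate_lintegral_empiricalBlockMeasure (hν : MeasurePreserving (shift 1) ν ν)
    (hmix : Asymptotics.SuperpolynomialDecay atTop (fun m : ℕ => (m : ℝ)) (strongMixingCoeff ν))
    {k : ℕ → ℕ} (hk : ∀ n, 0 < k n) {κ : ℝ} (hkκ : ∀ᶠ n : ℕ in atTop, rexp (n * κ) ≤ k n)
    {V V' : ℕ → (ℕ → E) → ℝ} (hV' : ∀ n, Measurable[cylinderEvents (Iio (2 * n))] (V' n))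
    (hVV' : ∀ ε > 0, ∀ᶠ n : ℕ in atTop, ∀ z, |V n z - V' n z| ≤ n * ε) {a a' b t : ℝ} (ht : 0 ≤ t)
    (ha : HasExpRate (fun n => ∫⁻ z, ENNReal.ofReal (rexp (V n z)) ∂ν) a)
    (ha' : HasExpRate (fun n => ∫⁻ z, ENNReal.ofReal (rexp ((1 + t) * V n z)) ∂ν) a')
    (hab : a' < a + t * b) (hκ : b - a < κ) :
    ∀ᵐ x ∂ν, HasExpRate
      (fun n => ∫⁻ z, ENNReal.ofReal (rexp (V n z)) ∂empiricalBlockMeasure n (k n) x) a := by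
  have hV'V : ∀ ε > 0, ∀ᶠ n : ℕ in atTop, ∀ z, |V' n z - V n z| ≤ n * ε := by
    simpa only [abs_sub_comm] using hVV'
  have htVV' : ∀ ε > 0, ∀ᶠ n : ℕ in atTop, ∀ z,
      |(1 + t) * V n z - (1 + t) * V' n z| ≤ n * ε := by
    intro ε hε
    filter_upwards [hVV' (ε / (1 + t)) (by positivity)] with n hn z
    rw [← mul_sub, abs_mul, abs_of_pos (by positivity), ← le_div_iff₀' (by positivity),
      mul_div_assoc]
    exact hn z
  filter_upwards [ae_hasExpRate_lintegral_empiricalBlockMeasure_of_cylinder hν hmix hk hkκ hV' ht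
    (ha.lintegral_exp_of_abs_sub_le hVV') (ha'.lintegral_exp_of_abs_sub_le htVV') hab hκ] with x hx
  exact hx.lintegral_exp_of_abs_sub_le hV'V

end EmpiricalRate

section Gradient

variable {H : Type*} [NormedAddCommGroup H] [InnerProductSpace ℝ H] [CompleteSpace H]
  {f : H → ℝ} {x g : H}

lemma add_inner_le_of_hasGradientAt (hg : HasGradientAt f g x) {y : H}
    (h : ∀ᶠ t : ℝ in 𝓝[>] 0, f (x + t • (y - x)) ≤ (1 - t) * f x + t * f y) :
    f x + ⟪y - x, g⟫ ≤ f y := by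
  have hslope := (hg.hasFDerivAt.hasLineDerivAt (y - x)).tendsto_slope_zero_right
  rw [InnerProductSpace.toDual_apply_apply, real_inner_comm] at hslope
  have hle : ⟪y - x, g⟫ ≤ f y - f x := by
    refine le_of_tendsto hslope ?_
    filter_upwards [h, self_mem_nhdsWithin] with t ht ht0
    rw [smul_eq_mul, inv_mul_le_iff₀ ht0]
    linarith
  linarith

-- The point `(1 + t) • y` is at distance `O(t)` from `x`, so that the error in the expansion of `f`
-- at `x` is `o(t)`.
lemma exists_eventually_dilation_lt_of_hasGradientAt (hg : HasGradientAt f g x) {D : Set H}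
    (hD : D ∈ 𝓝 x) {η : ℝ} (hη : 0 < η) :
    ∃ t > 0, ∀ᶠ y in 𝓝 x, (1 + t) • y ∈ D ∧ f ((1 + t) • y) < f y + t * (⟪y, g⟫ + η) := by
  set c := η / (2 * (‖x‖ + 3)) with hc_def
  have hc : 0 < c := by positivity
  obtain ⟨ρ, hρ0, hρ⟩ := Metric.eventually_nhds_iff_ball.1
    ((eventually_mem_set.2 hD).and ((hasGradientAt_iff_isLittleO.1 hg).bound hc))
  simp only [mem_ball_iff_norm] at hρ
  obtain ⟨t, ht0, ht1, htρ⟩ : ∃ t > 0, t < 1 ∧ t * (‖x‖ + 2) < ρ := by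
    refine ⟨min (1 / 2) (ρ / (2 * (‖x‖ + 2))), by positivity,
      (min_le_left _ _).trans_lt (by norm_num), ?_⟩
    have hle := min_le_right (1 / 2) (ρ / (2 * (‖x‖ + 2)))
    rw [le_div_iff₀ (by positivity)] at hle
    linarith
  refine ⟨t, ht0, Metric.eventually_nhds_iff_ball.2 ⟨t, ht0, fun y hy => ?_⟩⟩
  rw [mem_ball_iff_norm] at hy
  have hsub : (1 + t) • y - x = (y - x) + t • y := by module
  have hdist : ‖(1 + t) • y - x‖ ≤ t * (‖x‖ + 2) := by
    calc ‖(1 + t) • y - x‖ ≤ ‖y - x‖ + t * ‖y‖ := by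
          rw [hsub]
          exact (norm_add_le _ _).trans_eq (by rw [norm_smul, Real.norm_of_nonneg ht0.le])
      _ ≤ t * (‖x‖ + 2) := by nlinarith [norm_le_norm_add_norm_sub' y x]
  have hty : t ≤ t * (‖x‖ + 2) := le_mul_of_one_le_right ht0.le (by linarith [norm_nonneg x])
  obtain ⟨hD', hdil⟩ := hρ _ (hdist.trans_lt htρ)
  have hfy := (hρ y (hy.trans_le (hty.trans htρ.le))).2.trans
    (mul_le_mul_of_nonneg_left hy.le hc.le)
  replace hdil := hdil.trans (mul_le_mul_of_nonneg_left hdist hc.le)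
  rw [hsub, inner_add_right, inner_smul_right, real_inner_comm y g, Real.norm_eq_abs] at hdil
  have herr : c * t + c * (t * (‖x‖ + 2)) = t * η / 2 := by
    rw [hc_def]
    field_simp
    ring
  refine ⟨hD', ?_⟩
  linarith [(abs_le.1 hfy).1, (abs_le.1 hdil).2, mul_pos ht0 hη]

end Gradient

section EmpiricalLaplaceTransform

variable {E : Type*} [MeasurableSpace E] {H : Type*} [NormedAddCommGroup H] [InnerProductSpace ℝ H]
  [MeasurableSpace H] [BorelSpace H] {S : ℕ → (ℕ → E) → H} {D : Set H} {L : H → ℝ} {x g : H}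

lemma convexOn_inv_mul_log_lintegral_empiricalBlockMeasure {S : (ℕ → E) → H} (hS : Measurable S)
    (n : ℕ) {k : ℕ} (hk : 0 < k) (z : ℕ → E) :
    ConvexOn ℝ univ fun y : H => (n : ℝ)⁻¹ *
      Real.log (∫⁻ w, ENNReal.ofReal (rexp ⟪y, S w⟫) ∂empiricalBlockMeasure n k z).toReal := by
  have hexp (y : H) : Measurable fun w => rexp ⟪y, S w⟫ :=
    ((continuous_const.inner continuous_id).measurable.comp hS).exp
  have := isProbabilityMeasure_empiricalBlockMeasure n hk z
  refine (convexOn_log_toReal_lintegral_exp_inner (IsProbabilityMeasure.ne_zero _) hS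
    fun y => ?_).smul (inv_nonneg.2 n.cast_nonneg)
  rw [lintegral_ofReal_empiricalBlockMeasure n hk z (hexp y) fun _ => (exp_pos _).le]
  exact ENNReal.ofReal_ne_top

variable [CompleteSpace H]

lemma isGreatest_inner_sub_of_hasGradientAt {α : Type*} [MeasurableSpace α] {μ : ℕ → Measure α}
    {S : ℕ → α → H} (hS : ∀ n, Measurable (S n)) (hD : D ∈ 𝓝 x) (hg : HasGradientAt L g x)
    (hL : ∀ y ∈ D, HasExpRate (fun n => ∫⁻ z, ENNReal.ofReal (rexp ⟪y, S n z⟫) ∂μ n) (L y)) :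
    IsGreatest ((fun y => ⟪y, g⟫ - L y) '' D) (⟪x, g⟫ - L x) := by
  refine ⟨mem_image_of_mem _ (mem_of_mem_nhds hD), ?_⟩
  rintro _ ⟨y, hy, rfl⟩
  have hseg : Tendsto (fun t : ℝ => x + t • (y - x)) (𝓝[>] 0) (𝓝 x) := by
    refine (Continuous.tendsto' (by fun_prop) _ _ (by simp)).mono_left nhdsWithin_le_nhds
  have htangent : L x + ⟪y - x, g⟫ ≤ L y := by
    refine add_inner_le_of_hasGradientAt hg ?_
    filter_upwards [hseg hD, Ioo_mem_nhdsGT one_pos] with t htD ht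
    refine (hL x (mem_of_mem_nhds hD)).le_of_forall_le_rpow_mul_rpow (hL y hy) (hL _ htD)
      (sub_nonneg.2 ht.2.le) ht.1.le fun n => ?_
    rw [show x + t • (y - x) = (1 - t) • x + t • y by module]
    exact lintegral_exp_inner_le_rpow_mul_rpow (hS n) (sub_nonneg.2 ht.2.le) ht.1.le (by ring) x y
  rw [inner_sub_left] at htangent
  linarith

variable {ν : Measure (ℕ → E)} [IsProbabilityMeasure ν] {S' : ℕ → (ℕ → E) → H} {k : ℕ → ℕ} {κ : ℝ}

lemma eventually_ae_hasExpRate_lintegral_empiricalBlockMeasure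
    (hν : MeasurePreserving (shift 1) ν ν)
    (hmix : Asymptotics.SuperpolynomialDecay atTop (fun m : ℕ => (m : ℝ)) (strongMixingCoeff ν))
    (hk : ∀ n, 0 < k n) (hkκ : ∀ᶠ n : ℕ in atTop, rexp (n * κ) ≤ k n)
    (hS' : ∀ n, Measurable[cylinderEvents (Iio (2 * n))] (S' n))
    (hSS' : ∀ ε > 0, ∀ᶠ n : ℕ in atTop, ∀ z, ‖S n z - S' n z‖ ≤ n * ε)
    (hD : D ∈ 𝓝 x) (hg : HasGradientAt L g x)
    (hL : ∀ y ∈ D, HasExpRate (fun n => ∫⁻ z, ENNReal.ofReal (rexp ⟪y, S n z⟫) ∂ν) (L y))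
    (hκ : ⟪x, g⟫ - L x < κ) :
    ∀ᶠ y in 𝓝 x, ∀ᵐ z ∂ν, HasExpRate (fun n => ∫⁻ w, ENNReal.ofReal (rexp ⟪y, S n w⟫)
      ∂empiricalBlockMeasure n (k n) z) (L y) := by
  obtain ⟨η, hη, hηκ⟩ : ∃ η > 0, ⟪x, g⟫ + η - L x < κ :=
    ⟨(κ - (⟪x, g⟫ - L x)) / 2, by linarith, by linarith⟩
  obtain ⟨t, ht, hdil⟩ := exists_eventually_dilation_lt_of_hasGradientAt hg hD hη
  have hcont : ContinuousAt (fun y => ⟪y, g⟫ + η - L y) x :=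
    (by fun_prop : ContinuousAt (fun y => ⟪y, g⟫ + η) x).sub hg.continuousAt
  filter_upwards [hD, hdil, hcont.eventually_lt_const hηκ] with y hyD ⟨htyD, hty⟩ hyκ
  have hinner : ∀ ε > 0, ∀ᶠ n : ℕ in atTop, ∀ z, |⟪y, S n z⟫ - ⟪y, S' n z⟫| ≤ n * ε := by
    intro ε hε
    filter_upwards [hSS' (ε / (‖y‖ + 1)) (by positivity)] with n hn z
    calc |⟪y, S n z⟫ - ⟪y, S' n z⟫| ≤ ‖y‖ * ‖S n z - S' n z‖ := by
          rw [← inner_sub_right]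
          exact abs_real_inner_le_norm _ _
      _ ≤ (‖y‖ + 1) * (n * (ε / (‖y‖ + 1))) := by
          gcongr
          exacts [le_add_of_nonneg_right one_pos.le, hn z]
      _ = n * ε := by field_simp
  exact ae_hasExpRate_lintegral_empiricalBlockMeasure hν hmix hk hkκ
    (fun n => (continuous_const.inner continuous_id).measurable.comp (hS' n)) hinner ht.le
    (hL y hyD) (by simpa only [real_inner_smul_left] using hL _ htyD) hty hyκ

theorem exists_ae_tendstoUniformlyOn_log_lintegral_empiricalBlockMeasure [FiniteDimensional ℝ H]
    (hν : MeasurePreserving (shift 1) ν ν)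
    (hmix : Asymptotics.SuperpolynomialDecay atTop (fun m : ℕ => (m : ℝ)) (strongMixingCoeff ν))
    (hk : ∀ n, 0 < k n) (hkκ : ∀ᶠ n : ℕ in atTop, rexp (n * κ) ≤ k n) (hS : ∀ n, Measurable (S n))
    (hS' : ∀ n, Measurable[cylinderEvents (Iio (2 * n))] (S' n))
    (hSS' : ∀ ε > 0, ∀ᶠ n : ℕ in atTop, ∀ z, ‖S n z - S' n z‖ ≤ n * ε)
    (hD : D ∈ 𝓝 x) (hg : HasGradientAt L g x)
    (hL : ∀ y ∈ D, HasExpRate (fun n => ∫⁻ z, ENNReal.ofReal (rexp ⟪y, S n z⟫) ∂ν) (L y))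
    (hκ : ⟪x, g⟫ - L x < κ) :
    ∃ r > 0, Metric.closedBall x r ⊆ D ∧ ∀ᵐ z ∂ν,
      TendstoUniformlyOn (fun (n : ℕ) (y : H) => (n : ℝ)⁻¹ *
        Real.log (∫⁻ w, ENNReal.ofReal (rexp ⟪y, S n w⟫) ∂empiricalBlockMeasure n (k n) z).toReal)
        L atTop (Metric.closedBall x r) := by
  obtain ⟨s, hs, hsD⟩ := Metric.eventually_nhds_iff_ball.1 ((eventually_mem_set.2 hD).and
    (eventually_ae_hasExpRate_lintegral_empiricalBlockMeasure hν hmix hk hkκ hS' hSS' hD hg hL hκ))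
  obtain ⟨Q, hQs, hQ, r, hr, hrs, hunif⟩ :=
    exists_countable_tendstoUniformlyOn_of_convexOn (Metric.ball_mem_nhds x hs)
  refine ⟨r, hr, fun y hy => (hsD y (hrs hy)).1, ?_⟩
  have hconv : ConvexOn ℝ (Metric.ball x s) L := convexOn_of_hasExpRate_lintegral_exp_inner hS
    (convex_ball x s) fun y hy => hL y (hsD y hy).1
  filter_upwards [(ae_ball_iff hQ).2 fun q hq => (hsD q (hQs hq)).2] with z hz
  exact hunif _ _ (fun n => (convexOn_inv_mul_log_lintegral_empiricalBlockMeasure (hS n) n (hk n)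
    z).subset (subset_univ _) (convex_ball x s)) hconv fun q hq =>
      (hz q hq).tendsto_inv_mul_log_toReal

end EmpiricalLaplaceTransform

section CylinderEvents

variable {ι : Type*} {A : ι → Type*}

lemma norm_sub_comp_piecewise_le {F : Type*} [SeminormedAddCommGroup F] {f f' : (∀ i, A i) → F}
    {Δ : Set ι} {c : ℝ} (hf' : DependsOn f' Δ) (h : ∀ z, ‖f z - f' z‖ ≤ c) (z z₀ : ∀ i, A i) :
    ‖f z - f (Δ.piecewise z z₀)‖ ≤ 2 * c := by
  have hpiece : f' (Δ.piecewise z z₀) = f' z :=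
    hf' fun i hi => piecewise_eq_of_mem _ _ _ hi
  calc ‖f z - f (Δ.piecewise z z₀)‖
      ≤ ‖f z - f' z‖ + ‖f' (Δ.piecewise z z₀) - f (Δ.piecewise z z₀)‖ := by
        rw [hpiece]
        exact norm_sub_le_norm_sub_add_norm_sub _ _ _
    _ ≤ 2 * c := by
        rw [norm_sub_rev (f' _)]
        linarith [h z, h (Δ.piecewise z z₀)]

variable [∀ i, MeasurableSpace (A i)]

lemma comap_cylinderEvents {Ω : Type*} (X : Ω → ∀ i, A i) (Δ : Set ι) :
    (cylinderEvents Δ).comap X =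
      ⨆ i ∈ Δ, MeasurableSpace.comap (fun ω => X ω i) inferInstance := by
  simp only [cylinderEvents, MeasurableSpace.comap_iSup, MeasurableSpace.comap_comp]
  rfl

lemma measurable_piecewise_cylinderEvents (Δ : Set ι) (z₀ : ∀ i, A i) :
    Measurable[cylinderEvents Δ] fun z => Δ.piecewise z z₀ := by
  refine @measurable_pi_lambda _ _ _ (cylinderEvents Δ) _ _ fun i => ?_
  by_cases hi : i ∈ Δ
  · simpa only [piecewise_eq_of_mem _ _ _ hi] using measurable_cylinderEvent_apply hi
  · simp only [piecewise_eq_of_notMem _ _ _ hi, measurable_const]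

lemma exists_measurable_cylinderEvents_norm_sub_le {F : Type*} [SeminormedAddCommGroup F]
    [MeasurableSpace F] {S S' : ℕ → (∀ i, A i) → F} {Δ : ℕ → Set ι} (hS : ∀ n, Measurable (S n))
    (hS' : ∀ n, DependsOn (S' n) (Δ n)) {δ : ℕ → ℝ} (hδ0 : Tendsto δ atTop (𝓝 0))
    (hδ : ∀ n z, ‖S n z - S' n z‖ ≤ n * δ n) (z₀ : ∀ i, A i) :
    ∃ S'' : ℕ → (∀ i, A i) → F, (∀ n, Measurable[cylinderEvents (Δ n)] (S'' n)) ∧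
      ∀ ε > 0, ∀ᶠ n : ℕ in atTop, ∀ z, ‖S n z - S'' n z‖ ≤ n * ε := by
  refine ⟨fun n z => S n ((Δ n).piecewise z z₀),
    fun n => (hS n).comp (measurable_piecewise_cylinderEvents (Δ n) z₀), fun ε hε => ?_⟩
  filter_upwards [hδ0.eventually_le_const (half_pos hε)] with n hn z
  calc ‖S n z - S n ((Δ n).piecewise z z₀)‖ ≤ 2 * (n * δ n) :=
        norm_sub_comp_piecewise_le (hS' n) (hδ n) z z₀
    _ ≤ 2 * (n * (ε / 2)) := by gcongr
    _ = n * ε := by ring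

end CylinderEvents

section CanonicalSpace

variable {Ω E : Type*} [MeasurableSpace Ω] [MeasurableSpace E] {P : Measure Ω} {X : Ω → ℕ → E}

lemma strongMixingCoeff_map_succ (hX : Measurable X) (m : ℕ) :
    strongMixingCoeff (P.map X) (m + 1) = ⨆ i : ℕ, rosenblattCoeff P
      (⨆ j ∈ Iic i, MeasurableSpace.comap (fun ω => X ω j) inferInstance)
      (⨆ j ∈ Ici (i + (m + 1)), MeasurableSpace.comap (fun ω => X ω j) inferInstance) := by
  simp only [strongMixingCoeff, ← comap_cylinderEvents,
    rosenblattCoeff_comap hX cylinderEvents_le_pi cylinderEvents_le_pi]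

lemma measurePreserving_shift_map (hX : Measurable X)
    (hstat : P.map (fun ω i => X ω (i + 1)) = P.map X) :
    MeasurePreserving (shift 1) (P.map X) (P.map X) :=
  ⟨measurable_shift 1, by rw [Measure.map_map (measurable_shift 1) hX]; exact hstat⟩

lemma toReal_lintegral_empiricalBlockMeasure (n : ℕ) {k : ℕ} (hk : 0 < k) (x : ℕ → E)
    {f : (ℕ → E) → ℝ} (hf : Measurable f) (hf0 : ∀ z, 0 ≤ f z) :
    (∫⁻ z, ENNReal.ofReal (f z) ∂empiricalBlockMeasure n k x).toReal =
      (k : ℝ)⁻¹ * ∑ j ∈ Finset.Icc 1 k, f fun i => x (i + (j - 1) * n) := by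
  rw [lintegral_ofReal_empiricalBlockMeasure n hk x hf hf0, ENNReal.toReal_ofReal
      (mul_nonneg (by positivity) (Finset.sum_nonneg fun _ _ => hf0 _)),
    ← Finset.Ico_add_one_right_eq_Icc, Finset.sum_Ico_eq_sum_range]
  simp only [Nat.add_sub_cancel, Nat.add_sub_cancel_left]
  rfl

lemma eventually_exp_mul_le_of_lt_liminf {k : ℕ → ℕ} (hk : ∀ n, 0 < k n) {κ : ℝ}
    (h : (κ : EReal) < atTop.liminf fun n : ℕ => ((Real.log (k n) / n : ℝ) : EReal)) :
    ∀ᶠ n : ℕ in atTop, rexp (n * κ) ≤ k n := by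
  filter_upwards [eventually_lt_of_lt_liminf h, eventually_gt_atTop 0] with n hn hn0
  rw [EReal.coe_lt_coe_iff, lt_div_iff₀' (Nat.cast_pos.2 hn0)] at hn
  exact (Real.le_log_iff_exp_le (Nat.cast_pos.2 (hk n))).1 hn.le

end CanonicalSpace

theorem theorem5_part1_general
    {Ω : Type*} [MeasurableSpace Ω] (P : Measure Ω) [IsProbabilityMeasure P]
    {E : Type*} [MeasurableSpace E]
    {H : Type*} [NormedAddCommGroup H] [InnerProductSpace ℝ H] [FiniteDimensional ℝ H]
    [CompleteSpace H] [MeasurableSpace H] [BorelSpace H]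
    (Xseq : Ω → ℕ → E) (hXmeas : Measurable Xseq)
    (hstat : Measure.map (fun ω => fun i => Xseq ω (i + 1)) P = Measure.map Xseq P)
    (SΦ : ℕ → (ℕ → E) → H) (hSΦmeas : ∀ n, Measurable (SΦ n))
    (Lmgf : ℕ → H → EReal)
    (hLmgf : ∀ n lam, Lmgf n lam = ((n : ℝ)⁻¹ : EReal) *
      ENNReal.log (∫⁻ ω, ENNReal.ofReal (Real.exp ⟪lam, SΦ n (Xseq ω)⟫) ∂P))
    (D : Set H) (Λ : H → ℝ)
    (hΛ : ∀ lam ∈ D, Tendsto (fun n => Lmgf n lam) atTop (𝓝 (Λ lam)))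
    (Λstar : H → ℝ) (hΛstar : ∀ x, Λstar x = ⨆ lam : D, (⟪(lam : H), x⟫ - Λ lam))
    (alphaX : ℕ → ℝ) (halpha0 : alphaX 0 = 1 / 2)
    (halpha : ∀ m, 1 ≤ m → alphaX m = ⨆ i : ℕ, sSup {r : ℝ | ∃ A B : Set Ω,
      MeasurableSet[⨆ kk ∈ Set.Iic i,
        MeasurableSpace.comap (fun ω => Xseq ω kk) inferInstance] A ∧
      MeasurableSet[⨆ jj ∈ Set.Ici (i + m),
        MeasurableSpace.comap (fun ω => Xseq ω jj) inferInstance] B ∧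
      r = |(P A).toReal * (P B).toReal - (P (A ∩ B)).toReal|})
    (αinv : ℝ → ℝ≥0∞)
    (hαinv : ∀ u, αinv u = sInf ((fun m : ℕ => (m : ℝ≥0∞)) '' {m | alphaX m ≤ u}))
    (hA2 : ∀ h : ℝ, 0 < h → ∫⁻ u in Set.Ioc (0 : ℝ) 1, (αinv u) ^ h ∂volume < ⊤)
    (SΦapp : ℕ → (ℕ → E) → H)
    (happdep : ∀ n (z z' : ℕ → E), (∀ i < 2 * n, z i = z' i) → SΦapp n z = SΦapp n z')
    (δ : ℕ → ℝ) (hδ0 : Tendsto δ atTop (𝓝 0))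
    (hδ : ∀ n z, ‖SΦ n z - SΦapp n z‖ ≤ (n : ℝ) * δ n)
    (k : ℕ → ℕ) (hkpos : ∀ n, 0 < k n)
    (Λemp : ℕ → Ω → H → ℝ)
    (hΛemp : ∀ n ω lam, Λemp n ω lam = (n : ℝ)⁻¹ *
      Real.log ((k n : ℝ)⁻¹ * ∑ j ∈ Finset.Icc 1 (k n),
        Real.exp ⟪lam, SΦ n (fun i => Xseq ω (i + (j - 1) * n))⟫))
    (lam₀ : H) (hD : D ∈ 𝓝 lam₀) (x₀ : H) (hx₀ : HasGradientAt Λ x₀ lam₀)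
    (hliminf : (Λstar x₀ : EReal) <
      Filter.atTop.liminf (fun n => ((Real.log (k n) / n : ℝ) : EReal))) :
    ∃ r > (0 : ℝ), Metric.closedBall lam₀ r ⊆ D ∧
      ∀ᵐ ω ∂P, TendstoUniformlyOn (fun n lam => Λemp n ω lam) Λ atTop
        (Metric.closedBall lam₀ r) := by
  obtain ⟨ω₀⟩ : Nonempty Ω := nonempty_of_isProbabilityMeasure P
  have hexp (n : ℕ) (y : H) : Measurable fun z => rexp ⟪y, SΦ n z⟫ :=
    ((continuous_const.inner continuous_id).measurable.comp (hSΦmeas n)).exp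
  have : IsProbabilityMeasure (P.map Xseq) := Measure.isProbabilityMeasure_map hXmeas.aemeasurable
  have hrate : ∀ y ∈ D, HasExpRate
      (fun n => ∫⁻ z, ENNReal.ofReal (rexp ⟪y, SΦ n z⟫) ∂P.map Xseq) (Λ y) := fun y hy => by
    simpa only [HasExpRate, lintegral_map (hexp _ y).ennreal_ofReal hXmeas, ← hLmgf] using hΛ y hy
  have hα : strongMixingCoeff (P.map Xseq) = alphaX := funext fun
    | 0 => halpha0.symm
    | m + 1 => (strongMixingCoeff_map_succ hXmeas m).trans (halpha (m + 1) m.succ_pos).symm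
  have hmix := superpolynomialDecay_strongMixingCoeff (ν := P.map Xseq)
    (by simpa only [hα, generalizedInverse, ← hαinv] using hA2)
  obtain ⟨κ, hκ, hkκ⟩ := EReal.lt_iff_exists_real_btwn.1 hliminf
  have hΛκ : ⟪lam₀, x₀⟫ - Λ lam₀ < κ := by
    rw [← (isGreatest_inner_sub_of_hasGradientAt hSΦmeas hD hx₀ hrate).csSup_eq, sSup_image',
      ← hΛstar]
    exact EReal.coe_lt_coe_iff.1 hκ
  obtain ⟨S', hS', hSS'⟩ := exists_measurable_cylinderEvents_norm_sub_le
    (Δ := fun n => Iio (2 * n)) hSΦmeas (fun n z z' h => happdep n z z' h) hδ0 hδ (Xseq ω₀)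
  obtain ⟨r, hr, hrD, hunif⟩ := exists_ae_tendstoUniformlyOn_log_lintegral_empiricalBlockMeasure
    (measurePreserving_shift_map hXmeas hstat) hmix hkpos
    (eventually_exp_mul_le_of_lt_liminf hkpos hkκ) hSΦmeas hS' hSS' hD hx₀ hrate hΛκ
  refine ⟨r, hr, hrD, (ae_of_ae_map hXmeas.aemeasurable hunif).mono fun ω hω => ?_⟩
  simpa only [hΛemp, toReal_lintegral_empiricalBlockMeasure _ (hkpos _) _ (hexp _ _)
    fun _ => (exp_pos _).le] using hω

/-- **Theorem 5(1).**
Under (A1'), (A2), (A3), if `λ₀ ∈ D`, `Λ` is differentiable at `λ₀` with `x₀ = ∇Λ(λ₀)`,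
and `liminf (log k(n))/n > Λ*(x₀)`, then there is `r > 0` with `B(λ₀,r) ⊆ D` such that
almost surely `Λₙ^ω` converges uniformly to `Λ` on `B(λ₀,r)`. -/
theorem theorem5_part1
    {Ω : Type*} [MeasurableSpace Ω] (P : Measure Ω) [IsProbabilityMeasure P]
    {E : Type*} [MeasurableSpace E] (d : ℕ)
    -- the stationary process
    (Xseq : Ω → ℕ → E) (hXmeas : Measurable Xseq)
    (hstat : Measure.map (fun ω => fun i => Xseq ω (i + 1)) P = Measure.map Xseq P)
    -- the ℝ^d-valued functionals SₙΦ
    (SΦ : ℕ → (ℕ → E) → EuclideanSpace ℝ (Fin d)) (hSΦmeas : ∀ n, Measurable (SΦ n))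
    -- the logarithmic moment generating functions Λₙ
    (Lmgf : ℕ → EuclideanSpace ℝ (Fin d) → EReal)
    (hLmgf : ∀ n lam, Lmgf n lam = ((n : ℝ)⁻¹ : EReal) *
      ENNReal.log (∫⁻ ω, ENNReal.ofReal (Real.exp ⟪lam, SΦ n (Xseq ω)⟫) ∂P))
    -- (A1'): Λₙ → Λ, finite on a convex open set D
    (D : Set (EuclideanSpace ℝ (Fin d))) (hDopen : IsOpen D) (hDconv : Convex ℝ D)
    (Λ : EuclideanSpace ℝ (Fin d) → ℝ)
    (hΛ : ∀ lam ∈ D, Tendsto (fun n => Lmgf n lam) atTop (nhds ((Λ lam : ℝ) : EReal)))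
    -- the Fenchel-Legendre transform of Λ
    (Λstar : EuclideanSpace ℝ (Fin d) → ℝ)
    (hΛstar : ∀ x, Λstar x = ⨆ lam : D, (⟪(lam : EuclideanSpace ℝ (Fin d)), x⟫ - Λ lam))
    -- (A2): mixing
    (alphaX : ℕ → ℝ) (halpha0 : alphaX 0 = 1 / 2)
    (halpha : ∀ m, 1 ≤ m → alphaX m = ⨆ i : ℕ, sSup {r : ℝ | ∃ A B : Set Ω,
      MeasurableSet[⨆ kk ∈ Set.Iic i,
        MeasurableSpace.comap (fun ω => Xseq ω kk) inferInstance] A ∧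
      MeasurableSet[⨆ jj ∈ Set.Ici (i + m),
        MeasurableSpace.comap (fun ω => Xseq ω jj) inferInstance] B ∧
      r = |(P A).toReal * (P B).toReal - (P (A ∩ B)).toReal|})
    (αinv : ℝ → ℝ≥0∞)
    (hαinv : ∀ u, αinv u = sInf ((fun m : ℕ => (m : ℝ≥0∞)) '' {m | alphaX m ≤ u}))
    (hA2 : ∀ h : ℝ, 0 < h → ∫⁻ u in Set.Ioc (0 : ℝ) 1, (αinv u) ^ h ∂volume < ⊤)
    -- (A3): approximation by functions of 2n coordinates
    (SΦapp : ℕ → (ℕ → E) → EuclideanSpace ℝ (Fin d))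
    (happdep : ∀ n (z z' : ℕ → E), (∀ i < 2 * n, z i = z' i) → SΦapp n z = SΦapp n z')
    (δ : ℕ → ℝ) (hδ0 : Tendsto δ atTop (nhds 0))
    (hδ : ∀ n z, ‖SΦ n z - SΦapp n z‖ ≤ (n : ℝ) * δ n)
    -- the sequence k(n)
    (k : ℕ → ℕ) (hkpos : ∀ n, 0 < k n)
    -- the empirical logarithmic moment generating functions Λₙ^ω
    (Λemp : ℕ → Ω → EuclideanSpace ℝ (Fin d) → ℝ)
    (hΛemp : ∀ n ω lam, Λemp n ω lam = (n : ℝ)⁻¹ *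
      Real.log ((k n : ℝ)⁻¹ * ∑ j ∈ Finset.Icc 1 (k n),
        Real.exp ⟪lam, SΦ n (fun i => Xseq ω (i + (j - 1) * n))⟫))
    -- λ₀ ∈ D at which Λ is differentiable, with gradient x₀
    (lam₀ : EuclideanSpace ℝ (Fin d)) (hlam₀ : lam₀ ∈ D)
    (x₀ : EuclideanSpace ℝ (Fin d)) (hx₀ : HasGradientAt Λ x₀ lam₀)
    (hliminf : (Λstar x₀ : EReal) <
      Filter.atTop.liminf (fun n => ((Real.log (k n) / n : ℝ) : EReal))) :
    ∃ r > (0 : ℝ), Metric.closedBall lam₀ r ⊆ D ∧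
      ∀ᵐ ω ∂P, TendstoUniformlyOn (fun n lam => Λemp n ω lam) Λ atTop
        (Metric.closedBall lam₀ r) :=
  theorem5_part1_general P Xseq hXmeas hstat SΦ hSΦmeas Lmgf hLmgf D Λ hΛ Λstar hΛstar alphaX
    halpha0 halpha αinv hαinv hA2 SΦapp happdep δ hδ0 hδ k hkpos Λemp hΛemp lam₀
    (hDopen.mem_nhds hlam₀) x₀ hx₀ hliminf
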